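/- Let n ≥ 2. Then: |ℱ̄ₙ(−)| = 0; |ℬ̄ₙ(−)| = Σ_{k=1}^{n−1} |𝒜̄_k(+, ×, ÷)| · |ℱ̄_{n−k}(+, ×, ÷)| − |𝒞̄ₙ(−)|; and |𝒞̄ₙ(−)| = Σ_{k=1}^{⌊n/2⌋} |𝒞̄_{n−2k}(+, ×, ÷)| · |ℱ̄_k(+, ×, ÷)|, where by convention |𝒞̄₀(+, ×, ÷)| = 1. -/

import Mathlib

/- Common framework: `K = ℝ(x₁,x₂,…)` is the field of rational functions over `ℝ` in
countably many variables (the fraction field of `MvPolynomial ℕ ℝ`), arithmetic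
expressions, the permutation action, isomorphism, types, the `EndsWith` classification,
multilinear forms and monicity, isomorphism classes and their counting. -/

open MvPolynomial

noncomputable section

abbrev P : Type := MvPolynomial ℕ ℝ
abbrev K : Type := FractionRing P

def toK : P →+* K := algebraMap P K

/-- The variable `xᵢ`, as an element of `K`. -/
def Xv (i : ℕ) : K := toK (X i)

/-- `Vars f` : the set of variables on which `f` depends, i.e. the variables occurring in a
representation of `f` as a quotient of two coprime polynomials. -/
def Vars (f : K) : Set ℕ :=
  {i | ∃ p q : P, q ≠ 0 ∧ IsRelPrime p q ∧ f = toK p / toK q ∧ (i ∈ p.vars ∨ i ∈ q.vars)}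

/-- `𝒜` : the smallest subset of `K` containing every variable and closed under the four
binary operations applied to expressions with disjoint variable sets. -/
inductive IsAE : K → Prop
  | var (i : ℕ) : IsAE (Xv i)
  | add {g h : K} : IsAE g → IsAE h → Disjoint (Vars g) (Vars h) → IsAE (g + h)
  | sub {g h : K} : IsAE g → IsAE h → Disjoint (Vars g) (Vars h) → IsAE (g - h)
  | mul {g h : K} : IsAE g → IsAE h → Disjoint (Vars g) (Vars h) → IsAE (g * h)
  | div {g h : K} : IsAE g → IsAE h → Disjoint (Vars g) (Vars h) → IsAE (g / h)

/-- The action `σ·f` of a permutation of the variables on `K`, substituting `σ(xᵢ)` for `xᵢ`. -/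
def permAct (σ : Equiv.Perm ℕ) : K ≃+* K :=
  IsFractionRing.ringEquivOfRingEquiv (renameEquiv ℝ σ).toRingEquiv

/-- `f ≅ g` : `f` and `g` are isomorphic, i.e. differ by a permutation of the variables. -/
def Iso (f g : K) : Prop := ∃ σ : Equiv.Perm ℕ, permAct σ f = g

/-- First type: `-f ∉ 𝒜`. -/
def FirstType (f : K) : Prop := IsAE f ∧ ¬ IsAE (-f)

/-- Second type: `-f ∈ 𝒜` but `f ≇ -f`. -/
def SecondType (f : K) : Prop := IsAE f ∧ IsAE (-f) ∧ ¬ Iso f (-f)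

/-- Third type: `-f ∈ 𝒜` and `f ≅ -f`. -/
def ThirdType (f : K) : Prop := IsAE f ∧ IsAE (-f) ∧ Iso f (-f)

/-- The four binary operators. -/
inductive Op : Type
  | add | sub | mul | div
deriving DecidableEq

/-- `EndsWith f o` : the arithmetic expression `f` ends with the operator `o`. -/
inductive EndsWith : K → Op → Prop
  | var (i : ℕ) : EndsWith (Xv i) Op.mul
  | add_base {i j : ℕ} (hij : i ≠ j) : EndsWith (Xv i + Xv j) Op.add
  | sub_base {i j : ℕ} (hij : i ≠ j) : EndsWith (Xv i - Xv j) Op.sub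
  | mul_base {i j : ℕ} (hij : i ≠ j) : EndsWith (Xv i * Xv j) Op.mul
  | div_base {i j : ℕ} (hij : i ≠ j) : EndsWith (Xv i / Xv j) Op.div
  | add_rec {g h : K} {o₁ o₂ : Op} : IsAE g → IsAE h → Disjoint (Vars g) (Vars h) →
      3 ≤ (Vars (g + h)).ncard → o₁ ≠ Op.sub → o₂ ≠ Op.sub →
      EndsWith g o₁ → EndsWith h o₂ → EndsWith (g + h) Op.add
  | mul_rec {g h : K} {o₁ o₂ : Op} : IsAE g → IsAE h → Disjoint (Vars g) (Vars h) →
      3 ≤ (Vars (g * h)).ncard → o₁ ≠ Op.div → o₂ ≠ Op.div →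
      EndsWith g o₁ → EndsWith h o₂ → EndsWith (g * h) Op.mul
  | div_rec {g h : K} {o₁ o₂ : Op} : IsAE g → IsAE h → Disjoint (Vars g) (Vars h) →
      3 ≤ (Vars (g / h)).ncard → o₁ ≠ Op.div → o₂ ≠ Op.div →
      EndsWith g o₁ → EndsWith h o₂ → EndsWith (g / h) Op.div
  | sub_rec {g h : K} {o₁ o₂ : Op} : IsAE g → IsAE h → Disjoint (Vars g) (Vars h) →
      3 ≤ (Vars (g - h)).ncard → o₁ ≠ Op.sub → o₂ ≠ Op.sub → FirstType h →
      EndsWith g o₁ → EndsWith h o₂ → EndsWith (g - h) Op.sub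

/-- `f` ends with one of the operators in `s`. -/
def EndsIn (f : K) (s : Set Op) : Prop := ∃ o ∈ s, EndsWith f o

/-- The binary operation on `K` corresponding to an operator. -/
def applyOp (o : Op) (a b : K) : K :=
  match o with
  | Op.add => a + b
  | Op.sub => a - b
  | Op.mul => a * b
  | Op.div => a / b

/-- The variable index set `{1, …, n}` (for the variables `x₁, …, xₙ`). -/
def varsUpTo (n : ℕ) : Set ℕ := {i | 1 ≤ i ∧ i ≤ n}

/-- `𝒜ₙ` : arithmetic expressions whose variable set is exactly `{x₁, …, xₙ}`. -/
def AEn (n : ℕ) : Set K := {f | IsAE f ∧ Vars f = varsUpTo n}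

/-- A multilinear polynomial: degree at most `1` in each variable. -/
def Multilinear (p : P) : Prop := ∀ i : ℕ, p.degreeOf i ≤ 1

/-- The key of a (multilinear) monomial: the sorted list of variables occurring in it;
keys are compared in the lexicographic order on lists. -/
def monKey (m : ℕ →₀ ℕ) : List ℕ := m.support.sort (· ≤ ·)

/-- A (multilinear) polynomial is monic if the coefficient of its lexicographically
leading (i.e. first) monomial is positive. -/
def MonicML (p : P) : Prop :=
  ∃ m ∈ p.support, 0 < p.coeff m ∧ ∀ m' ∈ p.support, monKey m ≤ monKey m'

/-- `MLForm f F₁ F₂` : `F₁ / F₂` is the multilinear form of `f`: `F₁, F₂` are coprime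
multilinear polynomials, `F₂` is monic, and `f = F₁ / F₂`. -/
def MLForm (f : K) (F₁ F₂ : P) : Prop :=
  Multilinear F₁ ∧ Multilinear F₂ ∧ IsRelPrime F₁ F₂ ∧ F₂ ≠ 0 ∧ MonicML F₂ ∧
    f = toK F₁ / toK F₂

/-- A monic arithmetic expression: the numerator of its multilinear form is monic as well. -/
def MonicAE (f : K) : Prop := ∃ F₁ F₂ : P, MLForm f F₁ F₂ ∧ MonicML F₁

/-- The isomorphism class of `f`. -/
def classOf (f : K) : Set K := {g | Iso f g}

/-- `S̄` : the set of isomorphism classes of elements of `S`. -/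
def classes (S : Set K) : Set (Set K) := classOf '' S

/-- `|S̄|` : the number of isomorphism classes of elements of `S`. -/
def countClasses (S : Set K) : ℕ := (classes S).ncard

/-- The number of isomorphism classes of elements of `S` depending on exactly `k` variables. -/
def gradeCount (S : Set K) (k : ℕ) : ℕ := countClasses {f ∈ S | (Vars f).ncard = k}

/-- `ω_n` for a graded family having `N k` elements in grade `k` : the sum over all
partitions `(k₁^{m₁},…,k_s^{m_s})` of `n` of `∏ⱼ C(N kⱼ + mⱼ - 1, mⱼ)`. -/
def omega (N : ℕ → ℕ) (n : ℕ) : ℕ :=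
  ∑ p : n.Partition,
    ∏ k ∈ p.parts.toFinset, Nat.choose (N k + p.parts.count k - 1) (p.parts.count k)

/-- `ω_n′` : the same sum restricted to non-trivial partitions, i.e. `ω_n - N n`. -/
def omega' (N : ℕ → ℕ) (n : ℕ) : ℕ := omega N n - N n

/-- `𝒜(s)` : arithmetic expressions ending with one of the operators in `s`. -/
def Aset (s : Set Op) : Set K := {f | IsAE f ∧ EndsIn f s}

/-- `ℱ(s)` : first-type arithmetic expressions ending with one of the operators in `s`. -/
def Fset (s : Set Op) : Set K := {f | FirstType f ∧ EndsIn f s}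

/-- `ℬ(s)` : second-type arithmetic expressions ending with one of the operators in `s`. -/
def Bset (s : Set Op) : Set K := {f | SecondType f ∧ EndsIn f s}

/-- `𝒞(s)` : third-type arithmetic expressions ending with one of the operators in `s`. -/
def Cset (s : Set Op) : Set K := {f | ThirdType f ∧ EndsIn f s}

/-- `ℳℬ(s)` : monic second-type arithmetic expressions ending with an operator in `s`. -/
def MBset (s : Set Op) : Set K := {f | SecondType f ∧ MonicAE f ∧ EndsIn f s}

/-! Every arithmetic expression that does not end with `-` is a sum, in disjoint variables, of
*additive atoms*: variables up to sign, and products or quotients of nonconstant elements. Such a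
decomposition is unique. Indeed, a mixed second difference shows that two variables interact in the
sum only if they lie in a common atom, so the variable sets of the atoms are determined, and two
atoms cannot differ by a nonzero constant.

It follows that an expression ending with `-` is `g - h` for unique `g` and `h`, the summand `-h`
collecting the atoms which are not arithmetic expressions. Such an expression is never of the first
type, since its negative is `h - g`. Splitting `g = p + c` into the atoms of the first type and the
remaining ones, `g - h ≅ -(g - h)` means that `p ≅ h` and `c ≅ -c`; here `c` may vanish, which is
the convention `|𝒞̄₀| = 1`. -/

/-! ### The permutation action and the variables of an element of `K` -/

lemma toK_injective : Function.Injective toK := IsFractionRing.injective P K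

lemma toK_ne_zero {p : P} (hp : p ≠ 0) : toK p ≠ 0 :=
  (map_ne_zero_iff toK toK_injective).2 hp

lemma exists_isRelPrime_eq_div (f : K) :
    ∃ p q : P, q ≠ 0 ∧ IsRelPrime p q ∧ f = toK p / toK q := by
  obtain ⟨p, q, hpq, hf⟩ := IsFractionRing.exists_reduced_fraction P f
  exact ⟨p, q, nonZeroDivisors.coe_ne_zero q, hpq, hf.symm.trans (IsFractionRing.mk'_eq_div q)⟩

lemma permAct_toK (σ : Equiv.Perm ℕ) (p : P) : permAct σ (toK p) = toK (rename σ p) :=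
  IsFractionRing.ringEquivOfRingEquiv_algebraMap _ p

lemma permAct_Xv (σ : Equiv.Perm ℕ) (i : ℕ) : permAct σ (Xv i) = Xv (σ i) := by
  simp [Xv, permAct_toK]

lemma permAct_mul (σ τ : Equiv.Perm ℕ) (f : K) :
    permAct (σ * τ) f = permAct σ (permAct τ f) := by
  obtain ⟨p, q, -, -, rfl⟩ := exists_isRelPrime_eq_div f
  simp only [map_div₀, permAct_toK, rename_rename, Equiv.Perm.coe_mul]

lemma permAct_one (f : K) : permAct 1 f = f := by
  obtain ⟨p, q, -, -, rfl⟩ := exists_isRelPrime_eq_div f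
  simp [permAct_toK]

lemma permAct_inv_permAct (σ : Equiv.Perm ℕ) (f : K) : permAct σ⁻¹ (permAct σ f) = f := by
  rw [← permAct_mul, inv_mul_cancel, permAct_one]

lemma vars_subset_of_dvd_of_ne_zero {p q : P} (hpq : p ∣ q) (hq : q ≠ 0) : p.vars ⊆ q.vars := by
  obtain ⟨r, rfl⟩ := hpq
  intro i hi
  rw [mem_vars_iff_degreeOf_ne_zero] at hi ⊢
  rw [degreeOf_mul_eq (left_ne_zero_of_mul hq) (right_ne_zero_of_mul hq)]
  exact (Nat.add_pos_left (Nat.pos_of_ne_zero hi) _).ne'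

lemma vars_eq_of_associated {p q : P} (hpq : Associated p q) : p.vars = q.vars := by
  rcases eq_or_ne q 0 with rfl | hq
  · rw [(associated_zero_iff_eq_zero p).1 hpq]
  · exact (vars_subset_of_dvd_of_ne_zero hpq.dvd hq).antisymm
      (vars_subset_of_dvd_of_ne_zero hpq.symm.dvd (hpq.ne_zero_iff.2 hq))

lemma associated_of_div_eq_div {p q p' q' : P} (hq : q ≠ 0) (hq' : q' ≠ 0)
    (h : IsRelPrime p q) (h' : IsRelPrime p' q') (e : toK p / toK q = toK p' / toK q') :
    Associated p p' ∧ Associated q q' := by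
  rw [div_eq_div_iff (toK_ne_zero hq) (toK_ne_zero hq'), ← map_mul, ← map_mul] at e
  replace e : p * q' = p' * q := toK_injective e
  exact ⟨associated_of_dvd_dvd (h.dvd_of_dvd_mul_right ⟨q', e.symm⟩)
      (h'.dvd_of_dvd_mul_right ⟨q, e⟩),
    associated_of_dvd_dvd (h.symm.dvd_of_dvd_mul_left ⟨p', by rw [e, mul_comm]⟩)
      (h'.symm.dvd_of_dvd_mul_left ⟨p, by rw [← e, mul_comm]⟩)⟩

lemma Vars_div_of_isRelPrime {p q : P} (hq : q ≠ 0) (h : IsRelPrime p q) :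
    Vars (toK p / toK q) = ↑(p.vars ∪ q.vars) := by
  ext i
  rw [Finset.mem_coe, Finset.mem_union]
  refine ⟨?_, fun hi => ⟨p, q, hq, h, rfl, hi⟩⟩
  rintro ⟨p', q', hq', h', e, hi⟩
  obtain ⟨hp, hq⟩ := associated_of_div_eq_div hq hq' h h' e
  rwa [vars_eq_of_associated hp, vars_eq_of_associated hq]

lemma Vars_finite (f : K) : (Vars f).Finite := by
  obtain ⟨p, q, hq, h, rfl⟩ := exists_isRelPrime_eq_div f
  rw [Vars_div_of_isRelPrime hq h]
  exact Finset.finite_toSet _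

lemma Vars_Xv (i : ℕ) : Vars (Xv i) = {i} := by
  have h := Vars_div_of_isRelPrime one_ne_zero (isRelPrime_one_right (x := (X i : P)))
  rwa [map_one, div_one, vars_one, Finset.union_empty, vars_X, Finset.coe_singleton] at h

lemma Vars_permAct_subset (σ : Equiv.Perm ℕ) (f : K) : Vars (permAct σ f) ⊆ σ '' Vars f := by
  obtain ⟨p, q, hq, h, rfl⟩ := exists_isRelPrime_eq_div f
  have hr : IsRelPrime (rename σ p) (rename σ q) :=
    IsRelPrime.of_map (renameEquiv ℝ σ).symm (by simpa [rename_rename] using h)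
  have hq' : rename σ q ≠ 0 := (map_ne_zero_iff _ (rename_injective _ σ.injective)).2 hq
  simp only [map_div₀, permAct_toK, Vars_div_of_isRelPrime hq h, Vars_div_of_isRelPrime hq' hr]
  rw [← Finset.coe_image, Finset.image_union, Finset.coe_subset]
  exact Finset.union_subset_union (vars_rename _ _) (vars_rename _ _)

lemma Vars_permAct (σ : Equiv.Perm ℕ) (f : K) : Vars (permAct σ f) = σ '' Vars f := by
  refine (Vars_permAct_subset σ f).antisymm ?_
  rintro _ ⟨i, hi, rfl⟩
  have h := Vars_permAct_subset σ⁻¹ (permAct σ f)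
  rw [permAct_inv_permAct] at h
  obtain ⟨j, hj, rfl⟩ := h hi
  simpa using hj

lemma ncard_Vars_permAct (σ : Equiv.Perm ℕ) (f : K) :
    (Vars (permAct σ f)).ncard = (Vars f).ncard := by
  rw [Vars_permAct, Set.ncard_image_of_injective _ σ.injective]

lemma disjoint_Vars_permAct (σ : Equiv.Perm ℕ) {f g : K} (h : Disjoint (Vars f) (Vars g)) :
    Disjoint (Vars (permAct σ f)) (Vars (permAct σ g)) := by
  rw [Vars_permAct, Vars_permAct]
  exact (Set.disjoint_image_iff σ.injective).2 h

lemma rename_congr_of_vars {σ τ : ℕ → ℕ} {p : P} (h : ∀ i ∈ p.vars, σ i = τ i) :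
    rename σ p = rename τ p :=
  hom_congr_vars (f₁ := (rename σ : P →ₐ[ℝ] P).toRingHom)
    (f₂ := (rename τ : P →ₐ[ℝ] P).toRingHom) (by ext; simp)
    (fun i hi _ => by simp [h i hi]) rfl

lemma permAct_congr {σ τ : Equiv.Perm ℕ} {f : K} (h : ∀ i ∈ Vars f, σ i = τ i) :
    permAct σ f = permAct τ f := by
  obtain ⟨p, q, hq, hr, rfl⟩ := exists_isRelPrime_eq_div f
  rw [Vars_div_of_isRelPrime hq hr] at h
  simp only [map_div₀, permAct_toK]
  rw [rename_congr_of_vars fun i hi => h i (Finset.mem_union_left _ hi),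
    rename_congr_of_vars fun i hi => h i (Finset.mem_union_right _ hi)]

lemma permAct_swap_eq_self {i j : ℕ} {f : K} (hi : i ∉ Vars f) (hj : j ∉ Vars f) :
    permAct (Equiv.swap i j) f = f := by
  refine (permAct_congr fun k hk => ?_).trans (permAct_one f)
  exact Equiv.swap_apply_of_ne_of_ne (ne_of_mem_of_not_mem hk hi) (ne_of_mem_of_not_mem hk hj)

lemma permAct_swap_ne_self {i j : ℕ} {f : K} (hi : i ∈ Vars f) (hj : j ∉ Vars f) :
    permAct (Equiv.swap i j) f ≠ f := fun e =>
  hj (e ▸ Vars_permAct (Equiv.swap i j) f ▸ ⟨i, hi, Equiv.swap_apply_left i j⟩)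

lemma Vars_subset_of_permAct_swap {f : K} {A : Set ℕ} (hA : A.Finite)
    (h : ∀ i ∉ A, ∀ j ∉ A, permAct (Equiv.swap i j) f = f) : Vars f ⊆ A := by
  intro i hi
  by_contra hiA
  obtain ⟨j, hj⟩ := (hA.union (Vars_finite f)).exists_notMem
  exact permAct_swap_ne_self hi (fun hf => hj (.inr hf)) (h i hiA j fun hA => hj (.inl hA))

lemma Vars_map₂_subset {F : K → K → K}
    (hF : ∀ σ g h, permAct σ (F g h) = F (permAct σ g) (permAct σ h)) (g h : K) :
    Vars (F g h) ⊆ Vars g ∪ Vars h :=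
  Vars_subset_of_permAct_swap ((Vars_finite g).union (Vars_finite h)) fun i hi j hj => by
    rw [hF, permAct_swap_eq_self (fun k => hi (.inl k)) (fun k => hj (.inl k)),
      permAct_swap_eq_self (fun k => hi (.inr k)) (fun k => hj (.inr k))]

lemma Vars_zero : Vars 0 = ∅ :=
  Set.subset_empty_iff.1 <| Vars_subset_of_permAct_swap Set.finite_empty fun _ _ _ _ => map_zero _

lemma ne_zero_of_nonempty_Vars {f : K} (h : (Vars f).Nonempty) : f ≠ 0 := by
  rintro rfl
  exact h.ne_empty Vars_zero

lemma Vars_neg_subset (f : K) : Vars (-f) ⊆ Vars f := by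
  simpa using Vars_map₂_subset (F := fun g _ => -g) (fun σ g _ => map_neg (permAct σ) g) f f

lemma Vars_neg (f : K) : Vars (-f) = Vars f :=
  (Vars_neg_subset f).antisymm (by simpa using Vars_neg_subset (-f))

lemma Vars_inv_subset (f : K) : Vars f⁻¹ ⊆ Vars f := by
  simpa using Vars_map₂_subset (F := fun g _ => g⁻¹) (fun σ g _ => map_inv₀ (permAct σ) g) f f

lemma Vars_inv (f : K) : Vars f⁻¹ = Vars f :=
  (Vars_inv_subset f).antisymm (by simpa using Vars_inv_subset f⁻¹)

lemma Vars_add_subset (g h : K) : Vars (g + h) ⊆ Vars g ∪ Vars h :=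
  Vars_map₂_subset (fun σ => map_add (permAct σ)) g h

lemma Vars_mul_subset (g h : K) : Vars (g * h) ⊆ Vars g ∪ Vars h :=
  Vars_map₂_subset (fun σ => map_mul (permAct σ)) g h

lemma Vars_subset_add {g h : K} (hd : Disjoint (Vars g) (Vars h)) : Vars g ⊆ Vars (g + h) := by
  have hs := Vars_add_subset (g + h) (-h)
  rw [add_neg_cancel_right, Vars_neg] at hs
  exact hd.subset_left_of_subset_union hs

lemma Vars_add {g h : K} (hd : Disjoint (Vars g) (Vars h)) :
    Vars (g + h) = Vars g ∪ Vars h :=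
  (Vars_add_subset g h).antisymm <|
    Set.union_subset (Vars_subset_add hd) (add_comm h g ▸ Vars_subset_add hd.symm)

lemma Vars_sub {g h : K} (hd : Disjoint (Vars g) (Vars h)) :
    Vars (g - h) = Vars g ∪ Vars h := by
  rw [sub_eq_add_neg, Vars_add (by rwa [Vars_neg]), Vars_neg]

lemma Vars_subset_mul {g h : K} (hd : Disjoint (Vars g) (Vars h)) (hh : h ≠ 0) :
    Vars g ⊆ Vars (g * h) := by
  have hs := Vars_mul_subset (g * h) h⁻¹
  rw [mul_inv_cancel_right₀ hh, Vars_inv] at hs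
  exact hd.subset_left_of_subset_union hs

lemma Vars_mul {g h : K} (hd : Disjoint (Vars g) (Vars h)) (hg : g ≠ 0) (hh : h ≠ 0) :
    Vars (g * h) = Vars g ∪ Vars h :=
  (Vars_mul_subset g h).antisymm <|
    Set.union_subset (Vars_subset_mul hd hh) (mul_comm h g ▸ Vars_subset_mul hd.symm hg)

lemma Vars_div {g h : K} (hd : Disjoint (Vars g) (Vars h)) (hg : g ≠ 0) (hh : h ≠ 0) :
    Vars (g / h) = Vars g ∪ Vars h := by
  rw [div_eq_mul_inv, Vars_mul (by rwa [Vars_inv]) hg (inv_ne_zero hh), Vars_inv]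

/-! ### Isomorphism -/

namespace Iso

lemma refl (f : K) : Iso f f := ⟨1, permAct_one f⟩

lemma symm {f g : K} : Iso f g → Iso g f := by
  rintro ⟨σ, rfl⟩
  exact ⟨σ⁻¹, permAct_inv_permAct σ f⟩

lemma trans {f g h : K} : Iso f g → Iso g h → Iso f h := by
  rintro ⟨σ, rfl⟩ ⟨τ, rfl⟩
  exact ⟨τ * σ, permAct_mul τ σ f⟩

lemma neg {f g : K} : Iso f g → Iso (-f) (-g) := by
  rintro ⟨σ, rfl⟩
  exact ⟨σ, map_neg _ _⟩

lemma ncard_Vars_eq {f g : K} : Iso f g → (Vars f).ncard = (Vars g).ncard := by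
  rintro ⟨σ, rfl⟩
  exact (ncard_Vars_permAct σ f).symm

end Iso

lemma classOf_eq_classOf_iff {f g : K} : classOf f = classOf g ↔ Iso f g := by
  refine ⟨fun h => ?_, fun h => Set.ext fun k => ⟨h.symm.trans, h.trans⟩⟩
  have hg : g ∈ classOf g := Iso.refl g
  rwa [← h] at hg

lemma exists_perm_eqOn {A : Set ℕ} (hA : A.Finite) {f : ℕ → ℕ} (hf : A.InjOn f) :
    ∃ σ : Equiv.Perm ℕ, A.EqOn σ f := by
  obtain ⟨σ, hσ⟩ := Cardinal.extend_function_of_lt ⟨A.domRestrict f, hf.injective⟩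
    (hA.lt_aleph0.trans_eq Cardinal.mk_nat.symm) ⟨Equiv.refl ℕ⟩
  exact ⟨σ, fun a ha => hσ ⟨a, ha⟩⟩

lemma exists_iso_Vars_eq {f : K} {B : Set ℕ} (hB : B.Finite) (h : (Vars f).ncard = B.ncard) :
    ∃ g, Iso f g ∧ Vars g = B := by
  obtain ⟨e, he⟩ := (Vars_finite f).exists_bijOn_of_encard_eq
    (t := B) (by rw [← (Vars_finite f).cast_ncard_eq, ← hB.cast_ncard_eq, h])
  obtain ⟨σ, hσ⟩ := exists_perm_eqOn (Vars_finite f) he.injOn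
  exact ⟨permAct σ f, ⟨σ, rfl⟩, by rw [Vars_permAct, hσ.image_eq, he.image_eq]⟩

lemma exists_iso_disjoint (f : K) {A : Set ℕ} (hA : A.Finite) :
    ∃ g, Iso f g ∧ Disjoint (Vars g) A := by
  obtain ⟨B, hBA, hB, hcard⟩ := hA.infinite_compl.exists_subset_ncard_eq (Vars f).ncard
  obtain ⟨g, hfg, rfl⟩ := exists_iso_Vars_eq hB hcard.symm
  exact ⟨g, hfg, Set.subset_compl_iff_disjoint_right.1 hBA⟩

lemma exists_perm_eqOn_eqOn {A B : Set ℕ} (hA : A.Finite) (hB : B.Finite) (hd : Disjoint A B)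
    {σ τ : Equiv.Perm ℕ} (hd' : Disjoint (σ '' A) (τ '' B)) :
    ∃ ρ : Equiv.Perm ℕ, A.EqOn ρ σ ∧ B.EqOn ρ τ := by
  classical
  have hσ : A.EqOn (A.piecewise σ τ) σ := A.piecewise_eqOn σ τ
  have hτ : B.EqOn (A.piecewise σ τ) τ :=
    (A.piecewise_eqOn_compl σ τ).mono hd.subset_compl_left
  obtain ⟨ρ, hρ⟩ := exists_perm_eqOn (hA.union hB) (f := A.piecewise σ τ) <|
    (Set.injOn_union hd).2 ⟨hσ.injOn_iff.2 σ.injective.injOn, hτ.injOn_iff.2 τ.injective.injOn,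
      fun a ha b hb => by
        rw [hσ ha, hτ hb]
        exact hd'.ne_of_mem ⟨a, ha, rfl⟩ ⟨b, hb, rfl⟩⟩
  exact ⟨ρ, (hρ.mono Set.subset_union_left).trans hσ, (hρ.mono Set.subset_union_right).trans hτ⟩

lemma exists_permAct_eq_and_eq {g h g' h' : K} (hg : Iso g g') (hh : Iso h h')
    (hd : Disjoint (Vars g) (Vars h)) (hd' : Disjoint (Vars g') (Vars h')) :
    ∃ σ, permAct σ g = g' ∧ permAct σ h = h' := by
  obtain ⟨σ, rfl⟩ := hg
  obtain ⟨τ, rfl⟩ := hh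
  rw [Vars_permAct, Vars_permAct] at hd'
  obtain ⟨ρ, hρσ, hρτ⟩ := exists_perm_eqOn_eqOn (Vars_finite g) (Vars_finite h) hd hd'
  exact ⟨ρ, permAct_congr hρσ, permAct_congr hρτ⟩

lemma exists_permAct_eq_and_eq_and_eq {g h k g' h' k' : K}
    (hg : Iso g g') (hh : Iso h h') (hk : Iso k k')
    (hgh : Disjoint (Vars g) (Vars h)) (hgk : Disjoint (Vars g) (Vars k))
    (hhk : Disjoint (Vars h) (Vars k)) (hgh' : Disjoint (Vars g') (Vars h'))
    (hgk' : Disjoint (Vars g') (Vars k')) (hhk' : Disjoint (Vars h') (Vars k')) :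
    ∃ σ, permAct σ g = g' ∧ permAct σ h = h' ∧ permAct σ k = k' := by
  obtain ⟨σ, rfl, rfl⟩ := exists_permAct_eq_and_eq hg hh hgh hgh'
  obtain ⟨τ, rfl⟩ := hk
  rw [Vars_permAct, Vars_permAct] at hgk' hhk'
  obtain ⟨ρ, hρσ, hρτ⟩ := exists_perm_eqOn_eqOn ((Vars_finite g).union (Vars_finite h))
    (Vars_finite k) (hgk.union_left hhk) (by rw [Set.image_union]; exact hgk'.union_left hhk')
  exact ⟨ρ, permAct_congr fun i hi => hρσ (.inl hi), permAct_congr fun i hi => hρσ (.inr hi),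
    permAct_congr hρτ⟩

/-! ### Arithmetic expressions -/

lemma permAct_applyOp (σ : Equiv.Perm ℕ) (o : Op) (g h : K) :
    permAct σ (applyOp o g h) = applyOp o (permAct σ g) (permAct σ h) := by
  cases o
  exacts [map_add _ _ _, map_sub _ _ _, map_mul _ _ _, map_div₀ _ _ _]

lemma Vars_applyOp {g h : K} (o : Op) (hd : Disjoint (Vars g) (Vars h)) (hg : g ≠ 0)
    (hh : h ≠ 0) : Vars (applyOp o g h) = Vars g ∪ Vars h := by
  cases o
  exacts [Vars_add hd, Vars_sub hd, Vars_mul hd hg hh, Vars_div hd hg hh]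

lemma isAE_applyOp {g h : K} (o : Op) (hg : IsAE g) (hh : IsAE h)
    (hd : Disjoint (Vars g) (Vars h)) : IsAE (applyOp o g h) := by
  cases o
  exacts [hg.add hh hd, hg.sub hh hd, hg.mul hh hd, hg.div hh hd]

namespace IsAE

@[elab_as_elim]
lemma applyOp_induction {motive : (f : K) → IsAE f → Prop} (var : ∀ i, motive (Xv i) (.var i))
    (applyOp : ∀ o g h (hg : IsAE g) (hh : IsAE h) (hd : Disjoint (Vars g) (Vars h)),
      motive g hg → motive h hh → motive (applyOp o g h) (isAE_applyOp o hg hh hd))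
    {f : K} (hf : IsAE f) : motive f hf := by
  induction hf with
  | var i => exact var i
  | add hg hh hd ihg ihh => exact applyOp .add _ _ hg hh hd ihg ihh
  | sub hg hh hd ihg ihh => exact applyOp .sub _ _ hg hh hd ihg ihh
  | mul hg hh hd ihg ihh => exact applyOp .mul _ _ hg hh hd ihg ihh
  | div hg hh hd ihg ihh => exact applyOp .div _ _ hg hh hd ihg ihh

lemma nonempty_Vars {f : K} (hf : IsAE f) : (Vars f).Nonempty := by
  induction hf using applyOp_induction with
  | var i => exact Vars_Xv i ▸ Set.singleton_nonempty i
  | applyOp o g h _ _ hd ihg ihh =>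
    rw [Vars_applyOp o hd (ne_zero_of_nonempty_Vars ihg) (ne_zero_of_nonempty_Vars ihh)]
    exact ihg.inl

lemma ne_zero {f : K} (hf : IsAE f) : f ≠ 0 := ne_zero_of_nonempty_Vars hf.nonempty_Vars

lemma permAct {f : K} (hf : IsAE f) (σ : Equiv.Perm ℕ) : IsAE (permAct σ f) := by
  induction hf using applyOp_induction with
  | var i => exact permAct_Xv σ i ▸ .var (σ i)
  | applyOp o g h _ _ hd ihg ihh =>
    exact permAct_applyOp σ o g h ▸ isAE_applyOp o ihg ihh (disjoint_Vars_permAct σ hd)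

lemma of_iso {f g : K} (hf : IsAE f) (h : Iso f g) : IsAE g := by
  obtain ⟨σ, rfl⟩ := h
  exact hf.permAct σ

lemma exists_eq_Xv_or_eq_applyOp {f : K} (hf : IsAE f) :
    (∃ i, f = Xv i) ∨ ∃ o g h, IsAE g ∧ IsAE h ∧ Disjoint (Vars g) (Vars h) ∧
      f = applyOp o g h := by
  cases hf using applyOp_induction with
  | var i => exact .inl ⟨i, rfl⟩
  | applyOp o g h hg hh hd => exact .inr ⟨o, g, h, hg, hh, hd, rfl⟩

end IsAE

/-! ### Mixed differences -/

/-- The difference `f(x) - f(x')` of `f` along the exchange of the variables `x` and `x'`. For `x'`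
not occurring in `f`, it vanishes exactly if `x` does not occur in `f`, and `f` has a nonzero mixed
difference in `x` and `y` if these two variables are not additively separated in `f`. -/
def swapDiff (x x' : ℕ) (f : K) : K := f - permAct (Equiv.swap x x') f

lemma swapDiff_add (x x' : ℕ) (f g : K) :
    swapDiff x x' (f + g) = swapDiff x x' f + swapDiff x x' g := by
  rw [swapDiff, map_add, add_sub_add_comm, ← swapDiff, ← swapDiff]

lemma swapDiff_eq_zero {x x' : ℕ} {f : K} (hx : x ∉ Vars f) (hx' : x' ∉ Vars f) :
    swapDiff x x' f = 0 := by
  rw [swapDiff, permAct_swap_eq_self hx hx', sub_self]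

lemma swapDiff_ne_zero {x x' : ℕ} {f : K} (hx : x ∈ Vars f) (hx' : x' ∉ Vars f) :
    swapDiff x x' f ≠ 0 :=
  sub_ne_zero.2 (permAct_swap_ne_self hx hx').symm

lemma swapDiff_mul_left {x x' : ℕ} {a b : K} (hx : x ∉ Vars b) (hx' : x' ∉ Vars b) :
    swapDiff x x' (a * b) = swapDiff x x' a * b := by
  rw [swapDiff, map_mul, permAct_swap_eq_self hx hx', ← sub_mul, ← swapDiff]

lemma swapDiff_mul_right {x x' : ℕ} {a b : K} (hx : x ∉ Vars a) (hx' : x' ∉ Vars a) :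
    swapDiff x x' (a * b) = a * swapDiff x x' b := by
  rw [mul_comm, swapDiff_mul_left hx hx', mul_comm]

lemma Vars_swapDiff_subset {x x' : ℕ} {f : K} (hx' : x' ∉ Vars f) :
    Vars (swapDiff x x' f) ⊆ insert x' (Vars f) := by
  have hswap : Vars (permAct (Equiv.swap x x') f) ⊆ insert x' (Vars f) := by
    rw [Vars_permAct]
    rintro _ ⟨i, hi, rfl⟩
    rcases eq_or_ne i x with rfl | hix
    · exact .inl (Equiv.swap_apply_left i x')
    · exact .inr (by rwa [Equiv.swap_apply_of_ne_of_ne hix (ne_of_mem_of_not_mem hi hx')])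
  rw [swapDiff, sub_eq_add_neg]
  refine (Vars_add_subset _ _).trans (Set.union_subset (Set.subset_insert _ _) ?_)
  rwa [Vars_neg]

section Fresh

variable {x x' y y' : ℕ} {a b t : K}

lemma swapDiff_swapDiff_eq_zero (hy : y ∉ Vars t) (hx' : x' ∉ Vars t) (hy' : y' ∉ Vars t)
    (hyx' : y ≠ x') (hy'x' : y' ≠ x') : swapDiff y y' (swapDiff x x' t) = 0 :=
  swapDiff_eq_zero (fun h => (Vars_swapDiff_subset hx' h).elim hyx' hy)
    (fun h => (Vars_swapDiff_subset hx' h).elim hy'x' hy')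

lemma swapDiff_swapDiff_mul (hx : x ∉ Vars b) (hy : y ∉ Vars a) (hx'a : x' ∉ Vars a)
    (hx'b : x' ∉ Vars b) (hy' : y' ∉ Vars a) (hyx' : y ≠ x') (hy'x' : y' ≠ x') :
    swapDiff y y' (swapDiff x x' (a * b)) = swapDiff x x' a * swapDiff y y' b := by
  rw [swapDiff_mul_left hx hx'b, swapDiff_mul_right
    (fun h => (Vars_swapDiff_subset hx'a h).elim hyx' hy)
    (fun h => (Vars_swapDiff_subset hx'a h).elim hy'x' hy')]

lemma mul_mul_swapDiff_swapDiff (hx : x ∉ Vars b) (hy : y ∉ Vars a) (hx' : x' ∉ Vars a ∪ Vars b)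
    (hy' : y' ∉ Vars a ∪ Vars b) (hyx' : y ≠ x') (hy'x' : y' ≠ x') :
    a * b * swapDiff y y' (swapDiff x x' (a * b)) =
      swapDiff x x' (a * b) * swapDiff y y' (a * b) := by
  rw [Set.mem_union, not_or] at hx' hy'
  rw [swapDiff_swapDiff_mul hx hy hx'.1 hx'.2 hy'.1 hyx' hy'x', swapDiff_mul_left hx hx'.2,
    swapDiff_mul_right hy hy'.1]
  ring

end Fresh

lemma exists_pair_notMem {A : Set ℕ} (hA : A.Finite) : ∃ x' ∉ A, ∃ y' ∉ A, y' ≠ x' := by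
  obtain ⟨x', hx'⟩ := hA.exists_notMem
  obtain ⟨y', hy'⟩ := (hA.insert x').exists_notMem
  exact ⟨x', hx', y', fun h => hy' (.inr h), fun h => hy' (.inl h)⟩

lemma mul_add_ne_add {x y : ℕ} {a b r t q : K} (hab : Disjoint (Vars a) (Vars b))
    (hx : x ∈ Vars a) (hy : y ∈ Vars b) (hr : x ∉ Vars r) (hq : x ∉ Vars q) (ht : y ∉ Vars t) :
    a * b + r ≠ t + q := by
  obtain ⟨x', hx', y', hy', hy'x'⟩ := exists_pair_notMem (((Vars_finite a).union
    (Vars_finite b)).union (((Vars_finite r).union (Vars_finite t)).union (Vars_finite q)))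
  simp only [Set.mem_union, not_or] at hx' hy'
  obtain ⟨⟨hx'a, hx'b⟩, ⟨hx'r, hx't⟩, hx'q⟩ := hx'
  obtain ⟨⟨hy'a, hy'b⟩, ⟨-, hy't⟩, -⟩ := hy'
  have hyx' : y ≠ x' := ne_of_mem_of_not_mem hy hx'b
  have hleft : swapDiff y y' (swapDiff x x' (a * b + r)) = swapDiff x x' a * swapDiff y y' b := by
    rw [swapDiff_add, swapDiff_eq_zero hr hx'r, add_zero,
      swapDiff_swapDiff_mul (hab.notMem_of_mem_left hx) (hab.notMem_of_mem_right hy)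
        hx'a hx'b hy'a hyx' hy'x']
  have hright : swapDiff y y' (swapDiff x x' (t + q)) = 0 := by
    rw [swapDiff_add, swapDiff_eq_zero hq hx'q, add_zero,
      swapDiff_swapDiff_eq_zero ht hx't hy't hyx' hy'x']
  intro e
  rw [e, hright] at hleft
  exact mul_ne_zero (swapDiff_ne_zero hx hx'a) (swapDiff_ne_zero hy hy'b) hleft.symm

lemma swapDiff_eq_of_Vars_sub_eq_empty {f g : K} (h : Vars (f - g) = ∅) (x x' : ℕ) :
    swapDiff x x' f = swapDiff x x' g := by
  have hx := swapDiff_eq_zero (x := x) (x' := x') (h ▸ Set.notMem_empty x)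
    (h ▸ Set.notMem_empty x')
  rw [← sub_add_cancel f g, swapDiff_add, hx, zero_add]

/-- The identity `f · Δ_y Δ_x f = Δ_x f · Δ_y f`, valid for a product `f` of a function of `x` and
a function of `y`, determines `f` from its differences. -/
lemma mul_eq_mul_of_Vars_sub_eq_empty {x y : ℕ} {a b a' b' : K}
    (hab : Disjoint (Vars a) (Vars b)) (hab' : Disjoint (Vars a') (Vars b'))
    (hxa : x ∈ Vars a) (hyb : y ∈ Vars b) (hxa' : x ∈ Vars a') (hyb' : y ∈ Vars b')
    (h : Vars (a * b - a' * b') = ∅) : a * b = a' * b' := by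
  obtain ⟨x', hx', y', hy', hy'x'⟩ := exists_pair_notMem (((Vars_finite a).union
    (Vars_finite b)).union ((Vars_finite a').union (Vars_finite b')))
  rw [Set.mem_union, not_or] at hx' hy'
  have hyx' : y ≠ x' := ne_of_mem_of_not_mem (Set.mem_union_right _ hyb) hx'.1
  have hxb := hab.notMem_of_mem_left hxa
  have hya := hab.notMem_of_mem_right hyb
  have hne : swapDiff y y' (swapDiff x x' (a * b)) ≠ 0 := by
    have hx'' := not_or.1 hx'.1
    have hy'' := not_or.1 hy'.1
    rw [swapDiff_swapDiff_mul hxb hya hx''.1 hx''.2 hy''.1 hyx' hy'x']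
    exact mul_ne_zero (swapDiff_ne_zero hxa hx''.1) (swapDiff_ne_zero hyb hy''.2)
  have hfg := swapDiff_eq_of_Vars_sub_eq_empty h
  refine mul_right_cancel₀ hne ?_
  rw [mul_mul_swapDiff_swapDiff hxb hya hx'.1 hy'.1 hyx' hy'x', hfg, hfg,
    mul_mul_swapDiff_swapDiff (hab'.notMem_of_mem_left hxa') (hab'.notMem_of_mem_right hyb')
      hx'.2 hy'.2 hyx' hy'x']

/-! ### Additive atoms -/

/-- An additive atom: up to sign a variable, or a product of two nonconstant elements in disjoint
sets of variables. These are the indecomposable summands of arithmetic expressions. -/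
inductive IsAddAtom : K → Prop
  | var (i : ℕ) : IsAddAtom (Xv i)
  | neg_var (i : ℕ) : IsAddAtom (-Xv i)
  | mul {a b : K} : (Vars a).Nonempty → (Vars b).Nonempty → Disjoint (Vars a) (Vars b) →
      IsAddAtom (a * b)

lemma exists_mem_cross_of_union_eq {α : Type*} {A B A' B' : Set α} (hA : A.Nonempty)
    (hB : B.Nonempty) (hA' : A'.Nonempty) (hB' : B'.Nonempty) (h : A ∪ B = A' ∪ B') :
    ∃ x ∈ A, ∃ y ∈ B, (x ∈ A' ∧ y ∈ B') ∨ (x ∈ B' ∧ y ∈ A') := by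
  by_contra! hc
  obtain ⟨x, hx⟩ := hA
  obtain ⟨y, hy⟩ := hB
  obtain ⟨x', hx'⟩ := hA'
  obtain ⟨y', hy'⟩ := hB'
  simp only [Set.ext_iff, Set.mem_union] at h
  grind

lemma Vars_subset_of_Vars_sub_eq_empty {f g : K} (h : Vars (f - g) = ∅) : Vars f ⊆ Vars g := by
  simpa [h] using Vars_add_subset (f - g) g

lemma Vars_eq_of_Vars_sub_eq_empty {f g : K} (h : Vars (f - g) = ∅) : Vars f = Vars g :=
  (Vars_subset_of_Vars_sub_eq_empty h).antisymm
    (Vars_subset_of_Vars_sub_eq_empty (by rwa [← neg_sub, Vars_neg]))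

lemma Vars_subset_add_self (f : K) : Vars f ⊆ Vars (f + f) := by
  have h := Vars_map₂_subset (F := fun g _ => g / 2)
    (fun σ g _ => (map_div₀ _ g 2).trans (by rw [map_ofNat])) (f + f) (f + f)
  rwa [add_self_div_two, Set.union_self] at h

lemma Vars_Xv_add_self_ne_empty (i : ℕ) : Vars (Xv i + Xv i) ≠ ∅ :=
  (((Vars_Xv i).symm ▸ Set.singleton_nonempty i).mono (Vars_subset_add_self (Xv i))).ne_empty

namespace IsAddAtom

lemma nonempty_Vars {s : K} (hs : IsAddAtom s) : (Vars s).Nonempty := by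
  cases hs with
  | var i => exact Vars_Xv i ▸ Set.singleton_nonempty i
  | neg_var i => exact Vars_neg (Xv i) ▸ Vars_Xv i ▸ Set.singleton_nonempty i
  | mul ha hb hd =>
    rw [Vars_mul hd (ne_zero_of_nonempty_Vars ha) (ne_zero_of_nonempty_Vars hb)]
    exact ha.inl

lemma div {a b : K} (ha : (Vars a).Nonempty) (hb : (Vars b).Nonempty)
    (hd : Disjoint (Vars a) (Vars b)) : IsAddAtom (a / b) := by
  rw [← Vars_inv b] at hb hd
  exact (div_eq_mul_inv a b).symm ▸ .mul ha hb hd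

lemma neg {s : K} (hs : IsAddAtom s) : IsAddAtom (-s) := by
  cases hs with
  | var i => exact .neg_var i
  | neg_var i => exact (neg_neg (Xv i)).symm ▸ .var i
  | mul ha hb hd =>
    rw [← neg_mul]
    exact .mul (by rwa [Vars_neg]) hb (by rwa [Vars_neg])

lemma permAct {s : K} (hs : IsAddAtom s) (σ : Equiv.Perm ℕ) : IsAddAtom (permAct σ s) := by
  cases hs with
  | var i => exact permAct_Xv σ i ▸ .var (σ i)
  | neg_var i =>
    rw [map_neg, permAct_Xv]
    exact .neg_var (σ i)
  | mul ha hb hd =>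
    rw [map_mul]
    exact .mul ((Vars_permAct σ _).symm ▸ ha.image σ) ((Vars_permAct σ _).symm ▸ hb.image σ)
      (disjoint_Vars_permAct σ hd)

lemma eq_Xv_or_eq_neg_Xv {s : K} (hs : IsAddAtom s) {i : ℕ} (h : Vars s = {i}) :
    s = Xv i ∨ s = -Xv i := by
  cases hs with
  | var j =>
    rw [Vars_Xv] at h
    exact .inl (by rw [Set.singleton_injective h])
  | neg_var j =>
    rw [Vars_neg, Vars_Xv] at h
    exact .inr (by rw [Set.singleton_injective h])
  | mul ha hb hd =>
    rw [Vars_mul hd (ne_zero_of_nonempty_Vars ha) (ne_zero_of_nonempty_Vars hb)] at h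
    obtain ⟨x, hx⟩ := ha
    obtain ⟨y, hy⟩ := hb
    have hxi : x = i := h.subset (.inl hx)
    have hyi : y = i := h.subset (.inr hy)
    exact absurd (hxi.trans hyi.symm) (hd.ne_of_mem hx hy)

lemma eq_of_Vars_eq_singleton {s t : K} (hs : IsAddAtom s) (ht : IsAddAtom t) {i : ℕ}
    (hi : Vars s = {i}) (h : Vars (s - t) = ∅) : s = t := by
  rcases hs.eq_Xv_or_eq_neg_Xv hi with rfl | rfl <;>
    rcases ht.eq_Xv_or_eq_neg_Xv ((Vars_eq_of_Vars_sub_eq_empty h).symm.trans hi) with rfl | rfl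
  · rfl
  · rw [sub_neg_eq_add] at h
    exact absurd h (Vars_Xv_add_self_ne_empty i)
  · rw [← neg_add', Vars_neg] at h
    exact absurd h (Vars_Xv_add_self_ne_empty i)
  · rfl

lemma eq_of_Vars_sub_eq_empty {s t : K} (hs : IsAddAtom s) (ht : IsAddAtom t)
    (h : Vars (s - t) = ∅) : s = t := by
  have hst := Vars_eq_of_Vars_sub_eq_empty h
  cases hs with
  | var i => exact eq_of_Vars_eq_singleton (.var i) ht (Vars_Xv i) h
  | neg_var i => exact eq_of_Vars_eq_singleton (.neg_var i) ht ((Vars_neg _).trans (Vars_Xv i)) h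
  | @mul a b ha hb hab => cases ht with
    | var j => exact eq_of_Vars_eq_singleton (.mul ha hb hab) (.var j) (hst.trans (Vars_Xv j)) h
    | neg_var j =>
      exact eq_of_Vars_eq_singleton (.mul ha hb hab) (.neg_var j)
        (hst.trans ((Vars_neg _).trans (Vars_Xv j))) h
    | @mul a' b' ha' hb' hab' =>
      rw [Vars_mul hab (ne_zero_of_nonempty_Vars ha) (ne_zero_of_nonempty_Vars hb),
        Vars_mul hab' (ne_zero_of_nonempty_Vars ha') (ne_zero_of_nonempty_Vars hb')] at hst
      obtain ⟨x, hx, y, hy, ⟨hx', hy'⟩ | ⟨hx', hy'⟩⟩ :=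
        exists_mem_cross_of_union_eq ha hb ha' hb' hst
      · exact mul_eq_mul_of_Vars_sub_eq_empty hab hab' hx hy hx' hy' h
      · rw [mul_comm a' b'] at h ⊢
        exact mul_eq_mul_of_Vars_sub_eq_empty hab hab'.symm hx hy hx' hy' h

lemma Vars_subset_of_add_eq_add {s r t q : K} (hs : IsAddAtom s)
    (hsr : Disjoint (Vars s) (Vars r)) (htq : Disjoint (Vars t) (Vars q))
    (hst : ¬ Disjoint (Vars s) (Vars t)) (e : s + r = t + q) : Vars s ⊆ Vars t := by
  have hmeet := Set.not_disjoint_iff_nonempty_inter.1 hst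
  by_cases hsingle : ∃ i, Vars s = {i}
  · obtain ⟨i, hi⟩ := hsingle
    rw [hi] at hmeet ⊢
    exact Set.singleton_subset_iff.2 (Set.singleton_inter_nonempty.1 hmeet)
  cases hs with
  | var i => exact absurd ⟨i, Vars_Xv i⟩ hsingle
  | neg_var i => exact absurd ⟨i, (Vars_neg _).trans (Vars_Xv i)⟩ hsingle
  | @mul a b ha hb hab =>
    have hV := Vars_mul hab (ne_zero_of_nonempty_Vars ha) (ne_zero_of_nonempty_Vars hb)
    by_contra hsub
    obtain ⟨x, hx, y, hy, ⟨hx', hy'⟩ | ⟨hy', hx'⟩⟩ := exists_mem_cross_of_union_eq ha hb hmeet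
      (Set.sdiff_nonempty.2 hsub) ((Set.inter_union_sdiff _ _).trans hV).symm
    · exact mul_add_ne_add hab hx hy (hsr.notMem_of_mem_left hx'.1)
        (htq.notMem_of_mem_left hx'.2) hy'.2 e
    · rw [mul_comm] at e
      exact mul_add_ne_add hab.symm hy hx (hsr.notMem_of_mem_left hx'.1)
        (htq.notMem_of_mem_left hx'.2) hy'.2 e

theorem eq_of_add_eq_add {s r t q : K} (hs : IsAddAtom s) (ht : IsAddAtom t)
    (hsr : Disjoint (Vars s) (Vars r)) (htq : Disjoint (Vars t) (Vars q))
    (hst : ¬ Disjoint (Vars s) (Vars t)) (e : s + r = t + q) : s = t := by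
  have hV : Vars s = Vars t := (hs.Vars_subset_of_add_eq_add hsr htq hst e).antisymm
    (ht.Vars_subset_of_add_eq_add htq hsr (fun h => hst h.symm) e.symm)
  have hs_sub : Vars (s - t) ⊆ Vars s := by
    simpa [sub_eq_add_neg, Vars_neg, hV] using Vars_add_subset s (-t)
  have hr_sub : Vars (s - t) ⊆ Vars q ∪ Vars r := by
    rw [sub_eq_sub_iff_add_eq_add.2 (e.trans (add_comm t q)), sub_eq_add_neg, ← Vars_neg r]
    exact Vars_add_subset q (-r)
  exact hs.eq_of_Vars_sub_eq_empty ht <|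
    Set.subset_empty_iff.1 (((hV ▸ htq).union_right hsr) hs_sub hr_sub)

end IsAddAtom

/-! ### Sums with disjoint variables -/

/-- The set of all finite sums of elements of `X` in pairwise disjoint sets of variables. -/
def disjointSums (X : Set K) : Set K :=
  {f | ∃ S : Finset K, ↑S ⊆ X ∧ (S : Set K).PairwiseDisjoint Vars ∧ f = ∑ s ∈ S, s}

lemma Vars_sum {S : Finset K} (hS : (S : Set K).PairwiseDisjoint Vars) :
    Vars (∑ s ∈ S, s) = ⋃ s ∈ S, Vars s := by
  classical
  induction S using Finset.induction_on with
  | empty => simp [Vars_zero]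
  | insert s S hs ih =>
    rw [Finset.coe_insert, Set.pairwiseDisjoint_insert_of_notMem hs] at hS
    rw [Finset.sum_insert hs, Vars_add, ih hS.1, Finset.set_biUnion_insert]
    rw [ih hS.1]
    exact Set.disjoint_iUnion₂_right.2 hS.2

lemma Vars_subset_Vars_sum {S : Finset K} (hS : (S : Set K).PairwiseDisjoint Vars) {s : K}
    (hs : s ∈ S) : Vars s ⊆ Vars (∑ s ∈ S, s) :=
  Vars_sum hS ▸ Set.subset_biUnion_of_mem (u := Vars) hs

lemma sum_eq_add_sum_erase_and_disjoint [DecidableEq K] {S : Finset K}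
    (hS : (S : Set K).PairwiseDisjoint Vars) {s : K} (hs : s ∈ S) :
    ∑ t ∈ S, t = s + ∑ t ∈ S.erase s, t ∧ Disjoint (Vars s) (Vars (∑ t ∈ S.erase s, t)) := by
  refine ⟨(Finset.add_sum_erase S id hs).symm, ?_⟩
  rw [Vars_sum (hS.subset (Finset.erase_subset s S))]
  exact Set.disjoint_iUnion₂_right.2 fun t ht =>
    hS hs (Finset.mem_of_mem_erase ht) (Finset.ne_of_mem_erase ht).symm

section disjointSums

variable {X Y : Set K}

lemma zero_mem_disjointSums : 0 ∈ disjointSums X := ⟨∅, by simp, by simp, by simp⟩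

lemma subset_disjointSums : X ⊆ disjointSums X := fun s hs => ⟨{s}, by simpa, by simp, by simp⟩

lemma disjointSums_mono (h : X ⊆ Y) : disjointSums X ⊆ disjointSums Y := by
  rintro _ ⟨S, hSX, hS, rfl⟩
  exact ⟨S, hSX.trans h, hS, rfl⟩

lemma map_mem_disjointSums {f : K} (φ : K ≃+ K)
    (hφ : ∀ ⦃s t⦄, Disjoint (Vars s) (Vars t) → Disjoint (Vars (φ s)) (Vars (φ t)))
    (hXY : ∀ s ∈ X, φ s ∈ Y) (hf : f ∈ disjointSums X) : φ f ∈ disjointSums Y := by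
  obtain ⟨S, hSX, hS, rfl⟩ := hf
  refine ⟨S.map φ.toEquiv.toEmbedding, ?_, ?_, by simp⟩
  · rw [Finset.coe_map]
    rintro _ ⟨s, hs, rfl⟩
    exact hXY s (hSX hs)
  · rw [Finset.coe_map]
    rintro _ ⟨s, hs, rfl⟩ _ ⟨t, ht, rfl⟩ hst
    exact hφ (hS hs ht (ne_of_apply_ne _ hst))

lemma permAct_mem_disjointSums {f : K} (σ : Equiv.Perm ℕ) (hXY : ∀ s ∈ X, permAct σ s ∈ Y)
    (hf : f ∈ disjointSums X) : permAct σ f ∈ disjointSums Y :=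
  map_mem_disjointSums (permAct σ).toAddEquiv (fun _ _ => disjoint_Vars_permAct σ) hXY hf

lemma neg_mem_disjointSums {f : K} (hXY : ∀ s ∈ X, -s ∈ Y) (hf : f ∈ disjointSums X) :
    -f ∈ disjointSums Y :=
  map_mem_disjointSums (AddEquiv.neg K) (fun s t hst => by
    simpa only [AddEquiv.neg_apply, Vars_neg] using hst) hXY hf

lemma disjoint_and_pairwiseDisjoint_union [DecidableEq K] (hX : ∀ s ∈ X, (Vars s).Nonempty)
    {S T : Finset K} (hSX : ↑S ⊆ X) (hS : (S : Set K).PairwiseDisjoint Vars)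
    (hT : (T : Set K).PairwiseDisjoint Vars)
    (hd : Disjoint (Vars (∑ s ∈ S, s)) (Vars (∑ t ∈ T, t))) :
    Disjoint S T ∧ ((S ∪ T : Finset K) : Set K).PairwiseDisjoint Vars := by
  have hST : ∀ s ∈ S, ∀ t ∈ T, Disjoint (Vars s) (Vars t) := fun s hs t ht =>
    hd.mono (Vars_subset_Vars_sum hS hs) (Vars_subset_Vars_sum hT ht)
  refine ⟨Finset.disjoint_left.2 fun s hs ht => ?_, ?_⟩
  · exact (hX s (hSX hs)).ne_empty (disjoint_self.1 (hST s hs s ht))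
  · rw [Finset.coe_union]
    exact Set.pairwiseDisjoint_union.2 ⟨hS, hT, fun s hs t ht _ => hST s hs t ht⟩

lemma add_mem_disjointSums (hX : ∀ s ∈ X, (Vars s).Nonempty) {f g : K}
    (hf : f ∈ disjointSums X) (hg : g ∈ disjointSums X) (hd : Disjoint (Vars f) (Vars g)) :
    f + g ∈ disjointSums X := by
  classical
  obtain ⟨S, hSX, hS, rfl⟩ := hf
  obtain ⟨T, hTX, hT, rfl⟩ := hg
  obtain ⟨hST, hU⟩ := disjoint_and_pairwiseDisjoint_union hX hSX hS hT hd
  refine ⟨S ∪ T, ?_, hU, (Finset.sum_union hST).symm⟩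
  rw [Finset.coe_union]
  exact Set.union_subset hSX hTX

lemma exists_add_of_mem_disjointSums (Q : K → Prop) {f : K} (hf : f ∈ disjointSums X) :
    ∃ g ∈ disjointSums {s ∈ X | Q s}, ∃ h ∈ disjointSums {s ∈ X | ¬ Q s},
      Disjoint (Vars g) (Vars h) ∧ f = g + h := by
  classical
  obtain ⟨S, hSX, hS, rfl⟩ := hf
  have hQ := hS.subset (Finset.coe_subset.2 (S.filter_subset Q))
  have hQ' := hS.subset (Finset.coe_subset.2 (S.filter_subset (¬ Q ·)))
  refine ⟨_, ⟨S.filter Q, ?_, hQ, rfl⟩, _, ⟨S.filter (¬ Q ·), ?_, hQ', rfl⟩, ?_,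
    (Finset.sum_filter_add_sum_filter_not S Q id).symm⟩
  · exact fun s hs => ⟨hSX (Finset.mem_filter.1 hs).1, (Finset.mem_filter.1 hs).2⟩
  · exact fun s hs => ⟨hSX (Finset.mem_filter.1 hs).1, (Finset.mem_filter.1 hs).2⟩
  · rw [Vars_sum hQ, Vars_sum hQ']
    refine Set.disjoint_iUnion₂_left.2 fun s hs => Set.disjoint_iUnion₂_right.2 fun t ht => ?_
    obtain ⟨hs, hsQ⟩ := Finset.mem_filter.1 hs
    obtain ⟨ht, htQ⟩ := Finset.mem_filter.1 ht
    exact hS hs ht fun hst => htQ (hst ▸ hsQ)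

lemma mem_of_mem_disjointSums (hXY : X ⊆ Y)
    (hadd : ∀ f ∈ Y, ∀ g ∈ Y, Disjoint (Vars f) (Vars g) → f + g ∈ Y) {f : K}
    (hf : f ∈ disjointSums X) (hf₀ : f ≠ 0) : f ∈ Y := by
  classical
  obtain ⟨S, hSX, hS, rfl⟩ := hf
  induction S using Finset.induction_on with
  | empty => exact absurd Finset.sum_empty hf₀
  | insert s S hs ih =>
    rw [Finset.coe_insert, Set.insert_subset_iff] at hSX
    obtain ⟨hsum, hd⟩ := sum_eq_add_sum_erase_and_disjoint hS (Finset.mem_insert_self s S)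
    rw [Finset.erase_insert hs] at hsum hd
    rw [hsum]
    by_cases h₀ : ∑ t ∈ S, t = 0
    · rw [h₀, add_zero]
      exact hXY hSX.1
    · have hS' := hS.subset (Finset.coe_subset.2 (Finset.subset_insert s S))
      exact hadd _ (hXY hSX.1) _ (ih hSX.2 hS' h₀) hd

end disjointSums

lemma IsAddAtom.mem_of_sum_eq_add {S : Finset K} (hSX : ∀ s ∈ S, IsAddAtom s)
    (hS : (S : Set K).PairwiseDisjoint Vars) {t q : K} (ht : IsAddAtom t)
    (htq : Disjoint (Vars t) (Vars q)) (e : ∑ s ∈ S, s = t + q) : t ∈ S := by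
  classical
  obtain ⟨i, hi⟩ := ht.nonempty_Vars
  have hiS : i ∈ Vars (∑ s ∈ S, s) := by
    rw [e, Vars_add htq]
    exact .inl hi
  rw [Vars_sum hS] at hiS
  obtain ⟨s, hs, his⟩ := Set.mem_iUnion₂.1 hiS
  obtain ⟨hsum, hd⟩ := sum_eq_add_sum_erase_and_disjoint hS hs
  exact (hSX s hs).eq_of_add_eq_add ht hd htq (Set.not_disjoint_iff.2 ⟨i, his, hi⟩)
    (hsum.symm.trans e) ▸ hs

theorem IsAddAtom.eq_of_sum_eq_sum {S T : Finset K} (hSX : ∀ s ∈ S, IsAddAtom s)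
    (hTX : ∀ t ∈ T, IsAddAtom t) (hS : (S : Set K).PairwiseDisjoint Vars)
    (hT : (T : Set K).PairwiseDisjoint Vars) (e : ∑ s ∈ S, s = ∑ t ∈ T, t) : S = T := by
  classical
  ext s
  constructor
  · intro hs
    obtain ⟨hsum, hd⟩ := sum_eq_add_sum_erase_and_disjoint hS hs
    exact mem_of_sum_eq_add hTX hT (hSX s hs) hd (e.symm.trans hsum)
  · intro hs
    obtain ⟨hsum, hd⟩ := sum_eq_add_sum_erase_and_disjoint hT hs
    exact mem_of_sum_eq_add hSX hS (hTX s hs) hd (e.trans hsum)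

theorem eq_and_eq_of_add_eq_add {X Y : Set K} (hX : ∀ s ∈ X, IsAddAtom s)
    (hY : ∀ s ∈ Y, IsAddAtom s) (hXY : Disjoint X Y) {p q p' q' : K} (hp : p ∈ disjointSums X)
    (hq : q ∈ disjointSums Y) (hp' : p' ∈ disjointSums X) (hq' : q' ∈ disjointSums Y)
    (hpq : Disjoint (Vars p) (Vars q)) (hpq' : Disjoint (Vars p') (Vars q'))
    (e : p + q = p' + q') : p = p' ∧ q = q' := by
  classical
  suffices hpp : p = p' from ⟨hpp, add_left_cancel (hpp ▸ e)⟩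
  have hX' : ∀ s ∈ X, (Vars s).Nonempty := fun s hs => (hX s hs).nonempty_Vars
  obtain ⟨S, hSX, hS, rfl⟩ := hp
  obtain ⟨T, hTY, hT, rfl⟩ := hq
  obtain ⟨S', hSX', hS', rfl⟩ := hp'
  obtain ⟨T', hTY', hT', rfl⟩ := hq'
  obtain ⟨hST, hU⟩ := disjoint_and_pairwiseDisjoint_union hX' hSX hS hT hpq
  obtain ⟨hST', hU'⟩ := disjoint_and_pairwiseDisjoint_union hX' hSX' hS' hT' hpq'
  have hatom : ∀ {S T : Finset K}, ↑S ⊆ X → ↑T ⊆ Y → ∀ s ∈ S ∪ T, IsAddAtom s :=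
    fun hS hT s hs => (Finset.mem_union.1 hs).elim (fun h => hX s (hS h)) fun h => hY s (hT h)
  rw [← Finset.sum_union hST, ← Finset.sum_union hST'] at e
  have hunion := IsAddAtom.eq_of_sum_eq_sum (hatom hSX hTY) (hatom hSX' hTY') hU hU' e
  have hfilter : ∀ {S T : Finset K}, ↑S ⊆ X → ↑T ⊆ Y → (S ∪ T).filter (· ∈ X) = S :=
    fun hS hT => by
      rw [Finset.filter_union, Finset.filter_true_of_mem hS, Finset.filter_false_of_mem
        fun t ht => hXY.notMem_of_mem_right (hT ht), Finset.union_empty]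
  rw [← hfilter hSX hTY, hunion, hfilter hSX' hTY']

/-! ### Arithmetic expressions as sums of atoms -/

/-- The sums, in pairwise disjoint sets of variables, of additive atoms satisfying `Q`. -/
def atomSums (Q : K → Prop) : Set K := disjointSums {s | IsAddAtom s ∧ Q s}

/-- `f` and `-f` are both arithmetic expressions, i.e. `f` is of the second or third type. -/
def Reversible (f : K) : Prop := IsAE f ∧ IsAE (-f)

lemma IsAE.reversible_of_not_firstType {f : K} (hf : IsAE f) (h : ¬ FirstType f) : Reversible f :=
  ⟨hf, by_contra fun hf' => h ⟨hf, hf'⟩⟩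

lemma atomSums_mono {Q R : K → Prop} (h : ∀ s, Q s → R s) : atomSums Q ⊆ atomSums R :=
  disjointSums_mono fun s hs => ⟨hs.1, h s hs.2⟩

lemma permAct_mem_atomSums {Q : K → Prop} (hQ : ∀ σ s, Q s → Q (permAct σ s)) {f : K}
    (hf : f ∈ atomSums Q) (σ : Equiv.Perm ℕ) : permAct σ f ∈ atomSums Q :=
  permAct_mem_disjointSums σ (fun _ hs => ⟨hs.1.permAct σ, hQ σ _ hs.2⟩) hf

lemma FirstType.permAct {f : K} (hf : FirstType f) (σ : Equiv.Perm ℕ) :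
    FirstType (permAct σ f) :=
  ⟨hf.1.permAct σ, fun h => hf.2 <| h.of_iso <| Iso.neg <| Iso.symm ⟨σ, rfl⟩⟩

lemma Reversible.permAct {f : K} (hf : Reversible f) (σ : Equiv.Perm ℕ) :
    Reversible (permAct σ f) :=
  ⟨hf.1.permAct σ, map_neg (_root_.permAct σ) f ▸ hf.2.permAct σ⟩

lemma atomSums_firstType_subset : atomSums FirstType ⊆ atomSums IsAE :=
  atomSums_mono fun _ hs => hs.1

lemma atomSums_reversible_subset : atomSums Reversible ⊆ atomSums IsAE :=
  atomSums_mono fun _ hs => hs.1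

lemma exists_firstType_add_reversible {X : Set K} (hX : ∀ s ∈ X, IsAddAtom s ∧ IsAE s) {f : K}
    (hf : f ∈ disjointSums X) :
    ∃ p ∈ disjointSums X ∩ atomSums FirstType, ∃ c ∈ disjointSums X ∩ atomSums Reversible,
      Disjoint (Vars p) (Vars c) ∧ f = p + c := by
  obtain ⟨p, hp, c, hc, hd, e⟩ := exists_add_of_mem_disjointSums FirstType hf
  refine ⟨p, ⟨disjointSums_mono (Set.sep_subset _ _) hp, disjointSums_mono ?_ hp⟩,
    c, ⟨disjointSums_mono (Set.sep_subset _ _) hc, disjointSums_mono ?_ hc⟩, hd, e⟩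
  · exact fun s hs => ⟨(hX s hs.1).1, hs.2⟩
  · exact fun s hs => ⟨(hX s hs.1).1, (hX s hs.1).2.reversible_of_not_firstType hs.2⟩

section AtomSums

variable {f g h p c g' h' p' c' : K}

lemma isAE_of_mem_atomSums (hf : f ∈ atomSums IsAE) (hf₀ : f ≠ 0) : IsAE f :=
  mem_of_mem_disjointSums (Y := {f | IsAE f}) (fun _ hs => hs.2)
    (fun _ hs _ ht hd => hs.add ht hd) hf hf₀

lemma neg_mem_atomSums_reversible (hf : f ∈ atomSums Reversible) : -f ∈ atomSums Reversible :=
  neg_mem_disjointSums (fun s hs => ⟨hs.1.neg, hs.2.2, (neg_neg s).symm ▸ hs.2.1⟩) hf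

lemma reversible_of_mem_atomSums (hf : f ∈ atomSums Reversible) (hf₀ : f ≠ 0) : Reversible f :=
  ⟨isAE_of_mem_atomSums (atomSums_reversible_subset hf) hf₀, isAE_of_mem_atomSums
    (atomSums_reversible_subset (neg_mem_atomSums_reversible hf)) (neg_ne_zero.2 hf₀)⟩

lemma FirstType.mem_atomSums (hf : f ∈ atomSums IsAE) (hf' : FirstType f) :
    f ∈ atomSums FirstType := by
  classical
  obtain ⟨S, hSX, hS, rfl⟩ := hf
  refine ⟨S, fun s hs => ⟨(hSX hs).1, (hSX hs).2, fun hneg => hf'.2 ?_⟩, hS, rfl⟩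
  obtain ⟨hsum, hd⟩ := sum_eq_add_sum_erase_and_disjoint hS hs
  rw [hsum, neg_add, ← sub_eq_add_neg]
  by_cases h₀ : ∑ t ∈ S.erase s, t = 0
  · rwa [h₀, sub_zero]
  · have hS' : S.erase s ⊆ S := Finset.erase_subset s S
    exact hneg.sub (isAE_of_mem_atomSums ⟨S.erase s, fun t ht => hSX (hS' ht),
      hS.subset (Finset.coe_subset.2 hS'), rfl⟩ h₀) (by rwa [Vars_neg])

theorem eq_and_eq_of_sub_eq_sub (hg : g ∈ atomSums IsAE) (hh : h ∈ atomSums FirstType)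
    (hg' : g' ∈ atomSums IsAE) (hh' : h' ∈ atomSums FirstType) (hgh : Disjoint (Vars g) (Vars h))
    (hgh' : Disjoint (Vars g') (Vars h')) (e : g - h = g' - h') : g = g' ∧ h = h' := by
  have hneg : ∀ {k}, k ∈ atomSums FirstType → -k ∈ disjointSums {s | IsAddAtom s ∧ ¬ IsAE s} :=
    neg_mem_disjointSums fun s hs => ⟨hs.1.neg, hs.2.2⟩
  rw [sub_eq_add_neg, sub_eq_add_neg] at e
  refine (eq_and_eq_of_add_eq_add (fun _ hs => hs.1) (fun _ hs => hs.1)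
    (Set.disjoint_left.2 fun _ hs hs' => hs'.2 hs.2) hg (hneg hh) hg' (hneg hh')
    ?_ ?_ e).imp_right neg_inj.1
  · rwa [Vars_neg]
  · rwa [Vars_neg]

theorem eq_of_add_sub_eq_add_sub (hp : p ∈ atomSums FirstType) (hc : c ∈ atomSums Reversible)
    (hh : h ∈ atomSums FirstType) (hp' : p' ∈ atomSums FirstType) (hc' : c' ∈ atomSums Reversible)
    (hh' : h' ∈ atomSums FirstType) (hpc : Disjoint (Vars p) (Vars c))
    (hph : Disjoint (Vars p) (Vars h)) (hch : Disjoint (Vars c) (Vars h))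
    (hpc' : Disjoint (Vars p') (Vars c')) (hph' : Disjoint (Vars p') (Vars h'))
    (hch' : Disjoint (Vars c') (Vars h')) (e : p + c - h = p' + c' - h') :
    p = p' ∧ c = c' ∧ h = h' := by
  have hadd : ∀ {p c}, p ∈ atomSums FirstType → c ∈ atomSums Reversible →
      Disjoint (Vars p) (Vars c) → p + c ∈ atomSums IsAE := fun hp hc =>
    add_mem_disjointSums (fun s hs => hs.1.nonempty_Vars) (atomSums_firstType_subset hp)
      (atomSums_reversible_subset hc)
  obtain ⟨hpc_eq, rfl⟩ := eq_and_eq_of_sub_eq_sub (hadd hp hc hpc) hh (hadd hp' hc' hpc') hh'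
    (by rw [Vars_add hpc]; exact hph.union_left hch)
    (by rw [Vars_add hpc']; exact hph'.union_left hch') e
  obtain ⟨rfl, rfl⟩ := eq_and_eq_of_add_eq_add (fun _ hs => hs.1) (fun _ hs => hs.1)
    (Set.disjoint_left.2 fun _ hs hs' => hs.2.2 hs'.2.2) hp hc hp' hc' hpc hpc' hpc_eq
  exact ⟨rfl, rfl, rfl⟩

lemma mem_atomSums_reversible_of_iso_neg (hc : c ∈ atomSums IsAE) (hcc : Iso c (-c)) :
    c ∈ atomSums Reversible := by
  obtain ⟨σ, hσ⟩ := hcc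
  obtain ⟨p, ⟨-, hp⟩, r, ⟨-, hr⟩, hd, rfl⟩ := exists_firstType_add_reversible (fun s hs => hs) hc
  have hzero : ∀ g, Disjoint (Vars g) (Vars 0) := fun g => Vars_zero ▸ Set.disjoint_empty _
  have hp₀ : 0 = p := (eq_of_add_sub_eq_add_sub
    (permAct_mem_atomSums (fun σ s hs => hs.permAct σ) hp σ)
    (permAct_mem_atomSums (fun σ s hs => hs.permAct σ) hr σ) zero_mem_disjointSums
    zero_mem_disjointSums (neg_mem_atomSums_reversible hr) hp (disjoint_Vars_permAct σ hd)
    (hzero _) (hzero _) (hzero _).symm (hzero _).symm (by rw [Vars_neg]; exact hd.symm)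
    (by rw [← map_add, hσ]; ring)).2.2
  rwa [← hp₀, zero_add]

theorem iso_and_iso_neg_of_add_sub_iso_neg (hp : p ∈ atomSums FirstType)
    (hc : c ∈ atomSums Reversible) (hh : h ∈ atomSums FirstType) (hpc : Disjoint (Vars p) (Vars c))
    (hph : Disjoint (Vars p) (Vars h)) (hch : Disjoint (Vars c) (Vars h))
    (e : Iso (p + c - h) (-(p + c - h))) : Iso p h ∧ Iso c (-c) := by
  obtain ⟨σ, hσ⟩ := e
  obtain ⟨hσp, hσc, -⟩ := eq_of_add_sub_eq_add_sub
    (permAct_mem_atomSums (fun σ s hs => hs.permAct σ) hp σ)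
    (permAct_mem_atomSums (fun σ s hs => hs.permAct σ) hc σ)
    (permAct_mem_atomSums (fun σ s hs => hs.permAct σ) hh σ) hh (neg_mem_atomSums_reversible hc) hp
    (disjoint_Vars_permAct σ hpc) (disjoint_Vars_permAct σ hph) (disjoint_Vars_permAct σ hch)
    (by rw [Vars_neg]; exact hch.symm) hph.symm (by rw [Vars_neg]; exact hpc.symm)
    (by rw [← map_add, ← map_sub, hσ]; ring)
  exact ⟨⟨σ, hσp⟩, ⟨σ, hσc⟩⟩

end AtomSums

/-! ### The final operator -/

lemma IsAE.exists_eq_Xv {f : K} (hf : IsAE f) (h : (Vars f).ncard = 1) : ∃ i, f = Xv i := by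
  obtain hi | ⟨o, g, k, hg, hk, hd, rfl⟩ := hf.exists_eq_Xv_or_eq_applyOp
  · exact hi
  · rw [Vars_applyOp o hd hg.ne_zero hk.ne_zero,
      Set.ncard_union_eq hd (Vars_finite g) (Vars_finite k)] at h
    have hg' := (Set.ncard_pos (Vars_finite g)).2 hg.nonempty_Vars
    have hk' := (Set.ncard_pos (Vars_finite k)).2 hk.nonempty_Vars
    omega

lemma firstType_Xv (i : ℕ) : FirstType (Xv i) := by
  refine ⟨.var i, fun h => ?_⟩
  obtain ⟨j, hj⟩ := h.exists_eq_Xv (by rw [Vars_neg, Vars_Xv, Set.ncard_singleton])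
  have hV := congrArg Vars hj
  rw [Vars_neg, Vars_Xv, Vars_Xv] at hV
  obtain rfl := Set.singleton_injective hV
  apply Vars_Xv_add_self_ne_empty i
  rw [add_eq_zero_iff_eq_neg.2 hj.symm, Vars_zero]

lemma Vars_Xv_disjoint {i j : ℕ} (hij : i ≠ j) : Disjoint (Vars (Xv i)) (Vars (Xv j)) := by
  rwa [Vars_Xv, Vars_Xv, Set.disjoint_singleton]

/-- The case split that merges the two clauses of `EndsWith` for each operator, one for two single
variables and one for at least three variables. -/
lemma three_le_or_exists_eq_Xv {g h : K} (o : Op) (hg : IsAE g) (hh : IsAE h)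
    (hd : Disjoint (Vars g) (Vars h)) :
    3 ≤ (Vars (applyOp o g h)).ncard ∨ ∃ i j, i ≠ j ∧ g = Xv i ∧ h = Xv j := by
  have hcard := Set.ncard_union_eq hd (Vars_finite g) (Vars_finite h)
  rw [← Vars_applyOp o hd hg.ne_zero hh.ne_zero] at hcard
  have hg' := (Set.ncard_pos (Vars_finite g)).2 hg.nonempty_Vars
  have hh' := (Set.ncard_pos (Vars_finite h)).2 hh.nonempty_Vars
  refine or_iff_not_imp_left.2 fun h3 => ?_
  obtain ⟨i, rfl⟩ := hg.exists_eq_Xv (by omega)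
  obtain ⟨j, rfl⟩ := hh.exists_eq_Xv (by omega)
  rw [Vars_Xv, Vars_Xv, Set.disjoint_singleton] at hd
  exact ⟨i, j, hd, rfl, rfl⟩

namespace EndsWith

lemma permAct {f : K} {o : Op} (hf : EndsWith f o) (σ : Equiv.Perm ℕ) :
    EndsWith (permAct σ f) o := by
  have hne : ∀ {i j : ℕ}, i ≠ j → σ i ≠ σ j := σ.injective.ne
  have hcard : ∀ {g : K}, 3 ≤ (Vars g).ncard → 3 ≤ (Vars (_root_.permAct σ g)).ncard :=
    fun h => (ncard_Vars_permAct σ _).symm ▸ h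
  induction hf with
  | var i => exact permAct_Xv σ i ▸ .var (σ i)
  | add_base hij => simpa only [map_add, permAct_Xv] using .add_base (hne hij)
  | sub_base hij => simpa only [map_sub, permAct_Xv] using .sub_base (hne hij)
  | mul_base hij => simpa only [map_mul, permAct_Xv] using .mul_base (hne hij)
  | div_base hij => simpa only [map_div₀, permAct_Xv] using .div_base (hne hij)
  | add_rec hg hh hd h3 h₁ h₂ _ _ ihg ihh =>
    have h3' := hcard h3
    rw [map_add] at h3' ⊢
    exact .add_rec (hg.permAct σ) (hh.permAct σ) (disjoint_Vars_permAct σ hd) h3' h₁ h₂ ihg ihh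
  | mul_rec hg hh hd h3 h₁ h₂ _ _ ihg ihh =>
    have h3' := hcard h3
    rw [map_mul] at h3' ⊢
    exact .mul_rec (hg.permAct σ) (hh.permAct σ) (disjoint_Vars_permAct σ hd) h3' h₁ h₂ ihg ihh
  | div_rec hg hh hd h3 h₁ h₂ _ _ ihg ihh =>
    have h3' := hcard h3
    rw [map_div₀] at h3' ⊢
    exact .div_rec (hg.permAct σ) (hh.permAct σ) (disjoint_Vars_permAct σ hd) h3' h₁ h₂ ihg ihh
  | sub_rec hg hh hd h3 h₁ h₂ hF _ _ ihg ihh =>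
    have h3' := hcard h3
    rw [map_sub] at h3' ⊢
    exact .sub_rec (hg.permAct σ) (hh.permAct σ) (disjoint_Vars_permAct σ hd) h3' h₁ h₂
      (hF.permAct σ) ihg ihh

lemma add {g h : K} {o₁ o₂ : Op} (hg : IsAE g) (hh : IsAE h) (hd : Disjoint (Vars g) (Vars h))
    (h₁ : o₁ ≠ .sub) (h₂ : o₂ ≠ .sub) (hgo : EndsWith g o₁) (hho : EndsWith h o₂) :
    EndsWith (g + h) .add := by
  obtain h3 | ⟨i, j, hij, rfl, rfl⟩ := three_le_or_exists_eq_Xv .add hg hh hd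
  · exact .add_rec hg hh hd h3 h₁ h₂ hgo hho
  · exact .add_base hij

lemma sub {g h : K} {o₁ o₂ : Op} (hg : IsAE g) (hh : FirstType h)
    (hd : Disjoint (Vars g) (Vars h)) (h₁ : o₁ ≠ .sub) (h₂ : o₂ ≠ .sub) (hgo : EndsWith g o₁)
    (hho : EndsWith h o₂) : EndsWith (g - h) .sub := by
  obtain h3 | ⟨i, j, hij, rfl, rfl⟩ := three_le_or_exists_eq_Xv .sub hg hh.1 hd
  · exact .sub_rec hg hh.1 hd h3 h₁ h₂ hh hgo hho
  · exact .sub_base hij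

end EndsWith

/-- The operators `+`, `×`, `÷` other than `-`. -/
abbrev nonSub : Set Op := {Op.add, Op.mul, Op.div}

/-- The multiplicative operators `×`, `÷`. -/
abbrev mulDiv : Set Op := {Op.mul, Op.div}

lemma mem_nonSub {o : Op} : o ∈ nonSub ↔ o ≠ .sub := by
  cases o <;> simp

lemma mem_Aset_sub_iff {f : K} : f ∈ Aset {Op.sub} ↔
    ∃ g ∈ Aset nonSub, ∃ h ∈ Fset nonSub, Disjoint (Vars g) (Vars h) ∧ f = g - h := by
  have hXv : ∀ i, EndsIn (Xv i) nonSub := fun i => ⟨.mul, by simp, .var i⟩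
  constructor
  · rintro ⟨-, o, rfl, hf⟩
    cases hf with
    | @sub_base i j hij =>
      exact ⟨Xv i, ⟨.var i, hXv i⟩, Xv j, ⟨firstType_Xv j, hXv j⟩, Vars_Xv_disjoint hij, rfl⟩
    | @sub_rec g h _ _ hg _ hd _ h₁ h₂ hF hgo hho =>
      exact ⟨g, ⟨hg, _, mem_nonSub.2 h₁, hgo⟩, h, ⟨hF, _, mem_nonSub.2 h₂, hho⟩, hd, rfl⟩
  · rintro ⟨g, ⟨hg, o₁, h₁, hgo⟩, h, ⟨hF, o₂, h₂, hho⟩, hd, rfl⟩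
    exact ⟨hg.sub hF.1 hd, .sub, rfl,
      .sub hg hF hd (mem_nonSub.1 h₁) (mem_nonSub.1 h₂) hgo hho⟩

lemma reversible_of_mem_Aset_sub {f : K} (hf : f ∈ Aset {Op.sub}) : Reversible f := by
  obtain ⟨g, hg, h, hh, hd, rfl⟩ := mem_Aset_sub_iff.1 hf
  exact ⟨hf.1, neg_sub g h ▸ hh.1.1.sub hg.1 hd.symm⟩

lemma Fset_sub_eq_empty : Fset {Op.sub} = ∅ :=
  Set.eq_empty_of_forall_notMem fun _ hf => hf.1.2 (reversible_of_mem_Aset_sub ⟨hf.1.1, hf.2⟩).2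

lemma isAddAtom_of_mem_Aset_mulDiv {f : K} (hf : f ∈ Aset mulDiv) : IsAddAtom f := by
  obtain ⟨-, o, rfl | rfl, hf⟩ := hf
  · cases hf with
    | var i => exact .var i
    | mul_base hij =>
      exact .mul (IsAE.var _).nonempty_Vars (IsAE.var _).nonempty_Vars (Vars_Xv_disjoint hij)
    | mul_rec hg hh hd => exact .mul hg.nonempty_Vars hh.nonempty_Vars hd
  · cases hf with
    | div_base hij =>
      exact .div (IsAE.var _).nonempty_Vars (IsAE.var _).nonempty_Vars (Vars_Xv_disjoint hij)
    | div_rec hg hh hd => exact .div hg.nonempty_Vars hh.nonempty_Vars hd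

lemma add_mem_Aset_nonSub {f g : K} (hf : f ∈ Aset nonSub) (hg : g ∈ Aset nonSub)
    (hd : Disjoint (Vars f) (Vars g)) : f + g ∈ Aset nonSub := by
  obtain ⟨hf, o₁, h₁, hfo⟩ := hf
  obtain ⟨hg, o₂, h₂, hgo⟩ := hg
  exact ⟨hf.add hg hd, .add, by simp,
    .add hf hg hd (mem_nonSub.1 h₁) (mem_nonSub.1 h₂) hfo hgo⟩

lemma EndsWith.mem_disjointSums {f : K} {o : Op} (hf : EndsWith f o) (hAE : IsAE f)
    (ho : o ≠ .sub) : f ∈ disjointSums (Aset mulDiv) := by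
  have hne : ∀ s ∈ Aset mulDiv, (Vars s).Nonempty := fun s hs => hs.1.nonempty_Vars
  induction hf with
  | add_base hij =>
    exact add_mem_disjointSums hne (subset_disjointSums ⟨.var _, .mul, by simp, .var _⟩)
      (subset_disjointSums ⟨.var _, .mul, by simp, .var _⟩) (Vars_Xv_disjoint hij)
  | add_rec hg hh hd _ h₁ h₂ _ _ ihg ihh =>
    exact add_mem_disjointSums hne (ihg hg h₁) (ihh hh h₂) hd
  | sub_base | sub_rec => exact absurd rfl ho
  | var i => exact subset_disjointSums ⟨hAE, .mul, by simp, .var i⟩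
  | mul_base hij => exact subset_disjointSums ⟨hAE, .mul, by simp, .mul_base hij⟩
  | div_base hij => exact subset_disjointSums ⟨hAE, .div, by simp, .div_base hij⟩
  | mul_rec hg hh hd h3 h₁ h₂ hgo hho =>
    exact subset_disjointSums ⟨hAE, .mul, by simp, .mul_rec hg hh hd h3 h₁ h₂ hgo hho⟩
  | div_rec hg hh hd h3 h₁ h₂ hgo hho =>
    exact subset_disjointSums ⟨hAE, .div, by simp, .div_rec hg hh hd h3 h₁ h₂ hgo hho⟩

lemma mem_Aset_nonSub_iff {f : K} : f ∈ Aset nonSub ↔ f ∈ disjointSums (Aset mulDiv) ∧ f ≠ 0 := by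
  refine ⟨fun ⟨hAE, o, ho, hf⟩ => ⟨hf.mem_disjointSums hAE (mem_nonSub.1 ho), hAE.ne_zero⟩,
    fun ⟨hf, hf₀⟩ => mem_of_mem_disjointSums ?_ (fun _ hf _ hg => add_mem_Aset_nonSub hf hg) hf hf₀⟩
  exact fun s hs => ⟨hs.1, hs.2.imp fun o ho => ⟨.inr ho.1, ho.2⟩⟩

lemma mem_Fset_iff {f : K} {s : Set Op} : f ∈ Fset s ↔ f ∈ Aset s ∧ FirstType f :=
  ⟨fun hf => ⟨⟨hf.1.1, hf.2⟩, hf.1⟩, fun hf => ⟨hf.2, hf.1.2⟩⟩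

lemma mem_Cset_iff {f : K} {s : Set Op} :
    f ∈ Cset s ↔ f ∈ Aset s ∧ Reversible f ∧ Iso f (-f) :=
  ⟨fun hf => ⟨⟨hf.1.1, hf.2⟩, ⟨hf.1.1, hf.1.2.1⟩, hf.1.2.2⟩,
    fun hf => ⟨⟨hf.2.1.1, hf.2.1.2, hf.2.2⟩, hf.1.2⟩⟩

/-- `S` is a union of isomorphism classes. -/
def IsoClosed (S : Set K) : Prop := ∀ ⦃f⦄, f ∈ S → ∀ ⦃g⦄, Iso f g → g ∈ S

lemma isoClosed_Aset (s : Set Op) : IsoClosed (Aset s) := by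
  rintro f ⟨hf, o, ho, hfo⟩ _ ⟨σ, rfl⟩
  exact ⟨hf.permAct σ, o, ho, hfo.permAct σ⟩

lemma isoClosed_Fset (s : Set Op) : IsoClosed (Fset s) := by
  rintro f ⟨hf, o, ho, hfo⟩ _ ⟨σ, rfl⟩
  exact ⟨hf.permAct σ, o, ho, hfo.permAct σ⟩

lemma Iso.neg_iff {f g : K} (h : Iso f g) : Iso f (-f) ↔ Iso g (-g) :=
  ⟨fun hf => h.symm.trans (hf.trans h.neg), fun hg => h.trans (hg.trans h.neg.symm)⟩

lemma isoClosed_Bset (s : Set Op) : IsoClosed (Bset s) := by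
  rintro f ⟨⟨hf, hf', hiso⟩, o, ho, hfo⟩ _ ⟨σ, rfl⟩
  have h : Iso f (permAct σ f) := ⟨σ, rfl⟩
  exact ⟨⟨hf.permAct σ, hf'.of_iso h.neg, h.neg_iff.not.1 hiso⟩, o, ho, hfo.permAct σ⟩

lemma isoClosed_Cset (s : Set Op) : IsoClosed (Cset s) := by
  rintro f ⟨⟨hf, hf', hiso⟩, o, ho, hfo⟩ _ ⟨σ, rfl⟩
  have h : Iso f (permAct σ f) := ⟨σ, rfl⟩
  exact ⟨⟨hf.permAct σ, hf'.of_iso h.neg, h.neg_iff.1 hiso⟩, o, ho, hfo.permAct σ⟩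

lemma disjointSums_Aset_subset : disjointSums (Aset mulDiv) ⊆ atomSums IsAE :=
  disjointSums_mono fun _ hs => ⟨isAddAtom_of_mem_Aset_mulDiv hs, hs.1⟩

lemma Aset_nonSub_subset : Aset nonSub ⊆ atomSums IsAE := fun _ hf =>
  disjointSums_Aset_subset (mem_Aset_nonSub_iff.1 hf).1

lemma Fset_nonSub_subset : Fset nonSub ⊆ atomSums FirstType := fun _ hf =>
  hf.1.mem_atomSums (Aset_nonSub_subset (mem_Fset_iff.1 hf).1)

lemma mem_insert_zero_Cset_nonSub_iff {c : K} : c ∈ insert 0 (Cset nonSub) ↔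
    c ∈ disjointSums (Aset mulDiv) ∧ c ∈ atomSums Reversible ∧ Iso c (-c) := by
  constructor
  · rintro (rfl | hc)
    · exact ⟨zero_mem_disjointSums, zero_mem_disjointSums, neg_zero (G := K).symm ▸ Iso.refl 0⟩
    · obtain ⟨hA, -, hiso⟩ := mem_Cset_iff.1 hc
      exact ⟨(mem_Aset_nonSub_iff.1 hA).1,
        mem_atomSums_reversible_of_iso_neg (Aset_nonSub_subset hA) hiso, hiso⟩
  · rintro ⟨hA, hR, hiso⟩
    refine or_iff_not_imp_left.2 fun hc₀ => mem_Cset_iff.2 ?_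
    exact ⟨mem_Aset_nonSub_iff.2 ⟨hA, hc₀⟩, reversible_of_mem_atomSums hR hc₀, hiso⟩

theorem mem_Cset_sub_iff {f : K} : f ∈ Cset {Op.sub} ↔
    ∃ c ∈ insert 0 (Cset nonSub), ∃ h ∈ Fset nonSub, ∃ p, Iso p h ∧ Disjoint (Vars p) (Vars c) ∧
      Disjoint (Vars p) (Vars h) ∧ Disjoint (Vars c) (Vars h) ∧ f = p + c - h := by
  constructor
  · intro hf
    obtain ⟨hA, -, hiso⟩ := mem_Cset_iff.1 hf
    obtain ⟨g, hg, h, hh, hd, rfl⟩ := mem_Aset_sub_iff.1 hA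
    obtain ⟨p, ⟨-, hp⟩, c, ⟨hcA, hc⟩, hpc, rfl⟩ := exists_firstType_add_reversible
      (fun s hs => ⟨isAddAtom_of_mem_Aset_mulDiv hs, hs.1⟩) (mem_Aset_nonSub_iff.1 hg).1
    rw [Vars_add hpc, Set.disjoint_union_left] at hd
    obtain ⟨hiso', hcc⟩ := iso_and_iso_neg_of_add_sub_iso_neg hp hc (Fset_nonSub_subset hh) hpc
      hd.1 hd.2 hiso
    exact ⟨c, mem_insert_zero_Cset_nonSub_iff.2 ⟨hcA, hc, hcc⟩, h, hh, p, hiso', hpc, hd.1,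
      hd.2, rfl⟩
  · rintro ⟨c, hc, h, hh, p, hiso, hpc, hph, hch, rfl⟩
    obtain ⟨σ, hσp, hσc, hσh⟩ := exists_permAct_eq_and_eq_and_eq hiso
      (mem_insert_zero_Cset_nonSub_iff.1 hc).2.2 hiso.symm hpc hph hch
      (by rw [Vars_neg]; exact hch.symm) hph.symm (by rw [Vars_neg]; exact hpc.symm)
    have hp : p ∈ Aset nonSub := (mem_Fset_iff.1 (isoClosed_Fset _ hh hiso.symm)).1
    have hg : p + c ∈ Aset nonSub := by
      rcases hc with rfl | hc
      · rwa [add_zero]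
      · exact add_mem_Aset_nonSub hp (mem_Cset_iff.1 hc).1 hpc
    have hA : p + c - h ∈ Aset {Op.sub} :=
      mem_Aset_sub_iff.2 ⟨_, hg, h, hh, by rw [Vars_add hpc]; exact hph.union_left hch, rfl⟩
    refine mem_Cset_iff.2 ⟨hA, reversible_of_mem_Aset_sub hA, σ, ?_⟩
    rw [map_sub, map_add, hσp, hσc, hσh]
    ring

/-! ### Counting isomorphism classes -/

instance : Finite Op :=
  Set.finite_univ_iff.1 <| ({Op.add, Op.sub, Op.mul, Op.div} : Set Op).toFinite.subset
    fun o _ => by cases o <;> simp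

lemma finite_setOf_isAE_Vars_subset (T : Finset ℕ) : {f : K | IsAE f ∧ Vars f ⊆ T}.Finite := by
  induction T using Finset.strongInduction with
  | H T ih =>
    set V : Set K := ⋃ A ∈ T.ssubsets, {f : K | IsAE f ∧ Vars f ⊆ A}
    have hVfin : V.Finite := T.ssubsets.finite_toSet.biUnion fun A hA =>
      ih A (Finset.mem_ssubsets.1 hA)
    have hmemV : ∀ {g h : K}, IsAE g → IsAE h → Disjoint (Vars g) (Vars h) → Vars g ⊆ T →
        Vars h ⊆ T → g ∈ V := by
      intro g h hg hh hd hgT hhT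
      have hA : (Vars_finite g).toFinset ⊂ T := by
        rw [← Finset.coe_ssubset, Set.Finite.coe_toFinset]
        refine hgT.ssubset_of_ne fun e => ?_
        exact hh.nonempty_Vars.ne_empty (hd.symm.eq_bot_of_le (hhT.trans e.ge))
      exact Set.mem_biUnion (Finset.mem_ssubsets.2 hA) ⟨hg, (Set.Finite.coe_toFinset _).ge⟩
    refine ((T.finite_toSet.image Xv).union
      (Set.finite_iUnion fun o => hVfin.image2 (applyOp o) hVfin)).subset ?_
    rintro f ⟨hf, hfT⟩
    obtain ⟨i, rfl⟩ | ⟨o, g, h, hg, hh, hd, rfl⟩ := hf.exists_eq_Xv_or_eq_applyOp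
    · rw [Vars_Xv, Set.singleton_subset_iff] at hfT
      exact .inl ⟨i, hfT, rfl⟩
    · rw [Vars_applyOp o hd hg.ne_zero hh.ne_zero, Set.union_subset_iff] at hfT
      exact .inr <| Set.mem_iUnion.2 ⟨o, Set.mem_image2_of_mem (hmemV hg hh hd hfT.1 hfT.2)
        (hmemV hh hg hd.symm hfT.2 hfT.1)⟩

lemma varsUpTo_eq (n : ℕ) : varsUpTo n = (Finset.Icc 1 n : Finset ℕ) :=
  (Finset.coe_Icc 1 n).symm

lemma finite_AEn (n : ℕ) : (AEn n).Finite :=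
  (finite_setOf_isAE_Vars_subset (Finset.Icc 1 n)).subset fun _ hf =>
    ⟨hf.1, (hf.2.trans (varsUpTo_eq n)).subset⟩

section Grade

variable {S T U : Set K} {n : ℕ}

lemma classes_inter_AEn (hS : IsoClosed S) (hAE : ∀ f ∈ S, IsAE f) (n : ℕ) :
    classes (S ∩ AEn n) = classes {f ∈ S | (Vars f).ncard = n} := by
  have hcard : (varsUpTo n).ncard = n := by
    rw [varsUpTo_eq, Set.ncard_coe_finset, Nat.card_Icc, add_tsub_cancel_right]
  ext C
  constructor
  · rintro ⟨f, ⟨hf, -, hV⟩, rfl⟩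
    exact ⟨f, ⟨hf, hV ▸ hcard⟩, rfl⟩
  · rintro ⟨f, ⟨hf, hV⟩, rfl⟩
    obtain ⟨g, hfg, hg⟩ := exists_iso_Vars_eq (varsUpTo_eq n ▸ Finset.finite_toSet _)
      (hV.trans hcard.symm)
    have hgS := hS hf hfg
    exact ⟨g, ⟨hgS, hAE g hgS, hg⟩, classOf_eq_classOf_iff.2 hfg.symm⟩

lemma countClasses_inter_AEn (hS : IsoClosed S) (hAE : ∀ f ∈ S, IsAE f) (n : ℕ) :
    countClasses (S ∩ AEn n) = gradeCount S n := by
  rw [countClasses, classes_inter_AEn hS hAE, gradeCount, countClasses]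

lemma finite_classes (hAE : ∀ f ∈ S, IsAE f) (n : ℕ) :
    (classes {f ∈ S | (Vars f).ncard = n}).Finite := by
  have h := classes_inter_AEn (S := {f | IsAE f}) (fun f hf g hfg => hf.of_iso hfg)
    (fun f hf => hf) n
  have hfin : (classes ({f | IsAE f} ∩ AEn n)).Finite :=
    ((finite_AEn n).subset Set.inter_subset_right).image classOf
  exact (h ▸ hfin).subset (Set.image_mono fun f hf => ⟨hAE f hf.1, hf.2⟩)

lemma ncard_image_eq_ncard_image {α β γ : Type*} {s : Set α} {f : α → β} {g : α → γ}
    (h : ∀ a ∈ s, ∀ b ∈ s, f a = f b ↔ g a = g b) : (f '' s).ncard = (g '' s).ncard := by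
  have hf : Set.InjOn Prod.fst ((fun a => (f a, g a)) '' s) := by
    rintro _ ⟨a, ha, rfl⟩ _ ⟨b, hb, rfl⟩ hab
    exact Prod.ext hab ((h a ha b hb).1 hab)
  have hg : Set.InjOn Prod.snd ((fun a => (f a, g a)) '' s) := by
    rintro _ ⟨a, ha, rfl⟩ _ ⟨b, hb, rfl⟩ hab
    exact Prod.ext ((h a ha b hb).2 hab) hab
  have hf' := hf.ncard_image
  have hg' := hg.ncard_image
  rw [Set.image_image] at hf' hg'
  exact hf'.trans hg'.symm

lemma ncard_Vars_eq_of_mem_classes {C : Set K} (hC : C ∈ classes {f ∈ S | (Vars f).ncard = n})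
    {f : K} (hf : classOf f = C) : (Vars f).ncard = n := by
  obtain ⟨g, ⟨-, rfl⟩, rfl⟩ := hC
  exact (classOf_eq_classOf_iff.1 hf).ncard_Vars_eq

lemma gradeCount_union (hT : IsoClosed T) (hST : Disjoint S T)
    (hS' : (classes {f ∈ S | (Vars f).ncard = n}).Finite)
    (hT' : (classes {f ∈ T | (Vars f).ncard = n}).Finite) :
    gradeCount (S ∪ T) n = gradeCount S n + gradeCount T n := by
  have hd : Disjoint (classes {f ∈ S | (Vars f).ncard = n})
      (classes {f ∈ T | (Vars f).ncard = n}) := by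
    refine Set.disjoint_left.2 ?_
    rintro _ ⟨f, hf, rfl⟩ ⟨g, hg, hgf⟩
    exact Set.disjoint_left.1 hST hf.1 (hT hg.1 (classOf_eq_classOf_iff.1 hgf))
  have hsep : {f ∈ S ∪ T | (Vars f).ncard = n} =
      {f ∈ S | (Vars f).ncard = n} ∪ {f ∈ T | (Vars f).ncard = n} := Set.sep_union
  rw [gradeCount, gradeCount, gradeCount, countClasses, countClasses, countClasses,
    ← Set.ncard_union_eq hd hS' hT', classes, classes, classes, hsep, Set.image_union]

/-- The relation `D g h f`, read as `f` being composed of `g` and `h`, sets up a correspondence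
between the isomorphism classes of `U` and the pairs of isomorphism classes of `S` and `T`. -/
structure IsDecomposition (S T U : Set K) (D : K → K → K → Prop) : Prop where
  exists_parts : ∀ f ∈ U, ∃ g ∈ S, ∃ h ∈ T, D g h f
  exists_whole : ∀ g ∈ S, ∀ h ∈ T, ∃ h' ∈ T, Iso h h' ∧ ∃ f ∈ U, D g h' f
  iso_iff : ∀ ⦃g⦄, g ∈ S → ∀ ⦃h⦄, h ∈ T → ∀ ⦃f⦄, D g h f → ∀ ⦃g'⦄, g' ∈ S → ∀ ⦃h'⦄, h' ∈ T →
    ∀ ⦃f'⦄, D g' h' f' → (Iso f f' ↔ Iso g g' ∧ Iso h h')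

section Decomposition

variable {ι : Type*} {D : K → K → K → Prop} {I : Finset ι} {a b : ι → ℕ}

lemma IsDecomposition.gradeCount_eq_ncard (hD : IsDecomposition S T U D)
    (hcard : ∀ ⦃g⦄, g ∈ S → ∀ ⦃h⦄, h ∈ T → ∀ ⦃f⦄, D g h f →
      ((Vars f).ncard = n ↔ ∃ k ∈ I, (Vars g).ncard = a k ∧ (Vars h).ncard = b k)) :
    gradeCount U n = (⋃ k ∈ I, classes {g ∈ S | (Vars g).ncard = a k} ×ˢ
      classes {h ∈ T | (Vars h).ncard = b k}).ncard := by
  choose! G hG H hH hGH using hD.exists_parts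
  have himage : (fun f => (classOf (G f), classOf (H f))) '' {f ∈ U | (Vars f).ncard = n} =
      ⋃ k ∈ I, classes {g ∈ S | (Vars g).ncard = a k} ×ˢ
        classes {h ∈ T | (Vars h).ncard = b k} := by
    ext ⟨C, C'⟩
    rw [Set.mem_iUnion₂]
    constructor
    · rintro ⟨f, ⟨hf, hfn⟩, e⟩
      obtain ⟨rfl, rfl⟩ := Prod.mk_inj.1 e
      obtain ⟨k, hk, hgk, hhk⟩ := (hcard (hG f hf) (hH f hf) (hGH f hf)).1 hfn
      exact ⟨k, hk, ⟨G f, ⟨hG f hf, hgk⟩, rfl⟩, ⟨H f, ⟨hH f hf, hhk⟩, rfl⟩⟩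
    · rintro ⟨k, hk, ⟨g, ⟨hg, hgk⟩, rfl⟩, ⟨h, ⟨hh, hhk⟩, rfl⟩⟩
      obtain ⟨h', hh', hhh', f, hf, hfD⟩ := hD.exists_whole g hg h hh
      obtain ⟨hGg, hHh⟩ := (hD.iso_iff (hG f hf) (hH f hf) (hGH f hf) hg hh' hfD).1 (Iso.refl f)
      refine ⟨f, ⟨hf, (hcard hg hh' hfD).2 ⟨k, hk, hgk, hhh'.ncard_Vars_eq ▸ hhk⟩⟩, Prod.ext ?_ ?_⟩
      · exact classOf_eq_classOf_iff.2 hGg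
      · exact classOf_eq_classOf_iff.2 (hHh.trans hhh'.symm)
  rw [← himage, gradeCount, countClasses, classes]
  refine ncard_image_eq_ncard_image fun f hf f' hf' => ?_
  rw [classOf_eq_classOf_iff, Prod.mk_inj, classOf_eq_classOf_iff, classOf_eq_classOf_iff]
  exact hD.iso_iff (hG f hf.1) (hH f hf.1) (hGH f hf.1) (hG f' hf'.1) (hH f' hf'.1) (hGH f' hf'.1)

theorem IsDecomposition.gradeCount_eq_sum_mul (hD : IsDecomposition S T U D)
    (hab : Set.InjOn (fun k => (a k, b k)) I)
    (hS : ∀ k, (classes {f ∈ S | (Vars f).ncard = k}).Finite)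
    (hT : ∀ k, (classes {f ∈ T | (Vars f).ncard = k}).Finite)
    (hcard : ∀ ⦃g⦄, g ∈ S → ∀ ⦃h⦄, h ∈ T → ∀ ⦃f⦄, D g h f →
      ((Vars f).ncard = n ↔ ∃ k ∈ I, (Vars g).ncard = a k ∧ (Vars h).ncard = b k)) :
    gradeCount U n = ∑ k ∈ I, gradeCount S (a k) * gradeCount T (b k) := by
  have hdisj : (I : Set ι).PairwiseDisjoint fun k =>
      classes {g ∈ S | (Vars g).ncard = a k} ×ˢ classes {h ∈ T | (Vars h).ncard = b k} :=
    fun k hk l hl hkl => Set.disjoint_left.2 fun C hCk hCl => hkl <| hab hk hl <| by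
      obtain ⟨⟨g, ⟨-, hg⟩, hgC⟩, ⟨h, ⟨-, hh⟩, hhC⟩⟩ := hCk
      exact Prod.ext (hg.symm.trans (ncard_Vars_eq_of_mem_classes hCl.1 hgC))
        (hh.symm.trans (ncard_Vars_eq_of_mem_classes hCl.2 hhC))
  have hunion := I.finite_toSet.ncard_biUnion (fun k _ => (hS (a k)).prod (hT (b k))) hdisj
  rw [finsum_mem_coe_finset] at hunion
  exact (hD.gradeCount_eq_ncard hcard).trans
    (hunion.trans (Finset.sum_congr rfl fun k _ => Set.ncard_prod))

end Decomposition

end Grade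

/-! ### Expressions ending with a subtraction -/

lemma finite_classes_insert_zero {S : Set K} (hAE : ∀ f ∈ S, IsAE f) (n : ℕ) :
    (classes {f ∈ insert 0 S | (Vars f).ncard = n}).Finite := by
  refine ((finite_classes hAE n).insert (classOf 0)).subset ?_
  rintro _ ⟨f, ⟨rfl | hf, hn⟩, rfl⟩
  · exact .inl rfl
  · exact .inr ⟨f, ⟨hf, hn⟩, rfl⟩

lemma gradeCount_insert_zero {S : Set K} (hAE : ∀ f ∈ S, IsAE f) (n : ℕ) :
    gradeCount (insert 0 S) n = if n = 0 then 1 else gradeCount S n := by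
  have h0 : (Vars 0).ncard = 0 := by rw [Vars_zero, Set.ncard_empty]
  split_ifs with hn
  · have hsing : {f ∈ insert 0 S | (Vars f).ncard = n} = {0} := by
      refine Set.eq_singleton_iff_unique_mem.2 ⟨⟨.inl rfl, h0.trans hn.symm⟩, ?_⟩
      rintro f ⟨hf | hf, hfn⟩
      · exact hf
      · exact absurd (hfn.trans hn)
          ((Set.ncard_pos (Vars_finite f)).2 (hAE f hf).nonempty_Vars).ne'
    rw [gradeCount, hsing, countClasses, classes, Set.image_singleton, Set.ncard_singleton]
  · have hsep : {f ∈ insert 0 S | (Vars f).ncard = n} = {f ∈ S | (Vars f).ncard = n} :=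
      Set.ext fun f => and_congr_left fun hfn => or_iff_right fun hf₀ =>
        hn (hfn.symm.trans (hf₀ ▸ h0))
    rw [gradeCount, hsep, gradeCount]

lemma isDecomposition_sub : IsDecomposition (Aset nonSub) (Fset nonSub) (Aset {Op.sub})
    fun g h f => Disjoint (Vars g) (Vars h) ∧ f = g - h where
  exists_parts f hf := by
    obtain ⟨g, hg, h, hh, hD⟩ := mem_Aset_sub_iff.1 hf
    exact ⟨g, hg, h, hh, hD⟩
  exists_whole g hg h hh := by
    obtain ⟨h', hhh', hd⟩ := exists_iso_disjoint h (Vars_finite g)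
    have hh' := isoClosed_Fset _ hh hhh'
    exact ⟨h', hh', hhh', g - h', mem_Aset_sub_iff.2 ⟨g, hg, h', hh', hd.symm, rfl⟩, hd.symm, rfl⟩
  iso_iff := by
    rintro g hg h hh _ ⟨hd, rfl⟩ g' hg' h' hh' _ ⟨hd', rfl⟩
    constructor
    · rintro ⟨σ, hσ⟩
      rw [map_sub] at hσ
      obtain ⟨hgg', hhh'⟩ := eq_and_eq_of_sub_eq_sub
        (Aset_nonSub_subset (isoClosed_Aset _ hg ⟨σ, rfl⟩))
        (Fset_nonSub_subset (isoClosed_Fset _ hh ⟨σ, rfl⟩)) (Aset_nonSub_subset hg')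
        (Fset_nonSub_subset hh') (disjoint_Vars_permAct σ hd) hd' hσ
      exact ⟨⟨σ, hgg'⟩, ⟨σ, hhh'⟩⟩
    · rintro ⟨hgg', hhh'⟩
      obtain ⟨σ, rfl, rfl⟩ := exists_permAct_eq_and_eq hgg' hhh' hd hd'
      exact ⟨σ, map_sub _ g h⟩

lemma isDecomposition_thirdType_sub :
    IsDecomposition (insert 0 (Cset nonSub)) (Fset nonSub) (Cset {Op.sub}) fun c h f =>
      ∃ p, Iso p h ∧ Disjoint (Vars p) (Vars c) ∧ Disjoint (Vars p) (Vars h) ∧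
        Disjoint (Vars c) (Vars h) ∧ f = p + c - h where
  exists_parts f hf := mem_Cset_sub_iff.1 hf
  exists_whole c hc h hh := by
    obtain ⟨h', hhh', hch⟩ := exists_iso_disjoint h (Vars_finite c)
    obtain ⟨p, hp, hd⟩ := exists_iso_disjoint h' ((Vars_finite c).union (Vars_finite h'))
    rw [Set.disjoint_union_right] at hd
    have hh' := isoClosed_Fset _ hh hhh'
    have hD : ∃ p', Iso p' h' ∧ Disjoint (Vars p') (Vars c) ∧ Disjoint (Vars p') (Vars h') ∧
        Disjoint (Vars c) (Vars h') ∧ p + c - h' = p' + c - h' :=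
      ⟨p, hp.symm, hd.1, hd.2, hch.symm, rfl⟩
    exact ⟨h', hh', hhh', p + c - h', mem_Cset_sub_iff.2 ⟨c, hc, h', hh', hD⟩, hD⟩
  iso_iff := by
    rintro c hc h hh _ ⟨p, hph, hpc, hdph, hch, rfl⟩ c' hc' h' hh' _
      ⟨p', hph', hpc', hdph', hch', rfl⟩
    have hF : ∀ {k l}, k ∈ Fset nonSub → Iso k l → l ∈ atomSums FirstType :=
      fun hk hkl => Fset_nonSub_subset (isoClosed_Fset _ hk hkl)
    constructor
    · rintro ⟨σ, hσ⟩
      rw [map_sub, map_add] at hσ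
      obtain ⟨-, hcc', hhh'⟩ := eq_of_add_sub_eq_add_sub (hF hh (hph.symm.trans ⟨σ, rfl⟩))
        (permAct_mem_atomSums (fun σ s hs => hs.permAct σ)
          (mem_insert_zero_Cset_nonSub_iff.1 hc).2.1 σ)
        (hF hh ⟨σ, rfl⟩) (hF hh' hph'.symm) (mem_insert_zero_Cset_nonSub_iff.1 hc').2.1
        (hF hh' (Iso.refl h')) (disjoint_Vars_permAct σ hpc) (disjoint_Vars_permAct σ hdph)
        (disjoint_Vars_permAct σ hch) hpc' hdph' hch' hσ
      exact ⟨⟨σ, hcc'⟩, ⟨σ, hhh'⟩⟩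
    · rintro ⟨hcc', hhh'⟩
      obtain ⟨σ, rfl, rfl, rfl⟩ := exists_permAct_eq_and_eq_and_eq
        (hph.trans (hhh'.trans hph'.symm)) hcc' hhh' hpc hdph hch hpc' hdph' hch'
      exact ⟨σ, by rw [map_sub, map_add]⟩

theorem gradeCount_Aset_sub (n : ℕ) : gradeCount (Aset {Op.sub}) n =
    ∑ k ∈ Finset.Icc 1 (n - 1), gradeCount (Aset nonSub) k * gradeCount (Fset nonSub) (n - k) := by
  refine isDecomposition_sub.gradeCount_eq_sum_mul (fun k _ l _ hkl => congrArg Prod.fst hkl)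
    (finite_classes fun f hf => hf.1) (finite_classes fun f hf => hf.1.1) ?_
  rintro g hg h hh _ ⟨hd, rfl⟩
  rw [Vars_sub hd, Set.ncard_union_eq hd (Vars_finite g) (Vars_finite h)]
  have hg' := (Set.ncard_pos (Vars_finite g)).2 hg.1.nonempty_Vars
  have hh' := (Set.ncard_pos (Vars_finite h)).2 hh.1.1.nonempty_Vars
  constructor
  · intro e
    exact ⟨(Vars g).ncard, Finset.mem_Icc.2 (by omega), rfl, by omega⟩
  · rintro ⟨k, hk, hgk, hhk⟩
    have := Finset.mem_Icc.1 hk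
    omega

theorem gradeCount_Cset_sub (n : ℕ) : gradeCount (Cset {Op.sub}) n =
    ∑ k ∈ Finset.Icc 1 (n / 2),
      (if n - 2 * k = 0 then 1 else gradeCount (Cset nonSub) (n - 2 * k)) *
        gradeCount (Fset nonSub) k := by
  have hC : ∀ f ∈ Cset nonSub, IsAE f := fun f hf => hf.1.1
  simp only [← gradeCount_insert_zero hC]
  refine isDecomposition_thirdType_sub.gradeCount_eq_sum_mul
    (fun k _ l _ hkl => congrArg Prod.snd hkl) (finite_classes_insert_zero hC)
    (finite_classes fun f hf => hf.1.1) ?_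
  rintro c - h hh _ ⟨p, hph, hpc, hdph, hch, rfl⟩
  have hV : Vars (p + c - h) = Vars p ∪ Vars c ∪ Vars h := by
    rw [Vars_sub (by rw [Vars_add hpc]; exact hdph.union_left hch), Vars_add hpc]
  rw [hV, Set.ncard_union_eq (hdph.union_left hch) ((Vars_finite p).union (Vars_finite c))
    (Vars_finite h), Set.ncard_union_eq hpc (Vars_finite p) (Vars_finite c), hph.ncard_Vars_eq]
  have hh' := (Set.ncard_pos (Vars_finite h)).2 hh.1.1.nonempty_Vars
  constructor
  · intro e
    exact ⟨(Vars h).ncard, Finset.mem_Icc.2 (by omega), by omega, rfl⟩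
  · rintro ⟨k, hk, hck, hhk⟩
    have := Finset.mem_Icc.1 hk
    omega

lemma Aset_sub_eq_union : Aset {Op.sub} = Bset {Op.sub} ∪ Cset {Op.sub} := by
  ext f
  constructor
  · intro hf
    have hR := reversible_of_mem_Aset_sub hf
    by_cases hiso : Iso f (-f)
    · exact .inr ⟨⟨hR.1, hR.2, hiso⟩, hf.2⟩
    · exact .inl ⟨⟨hR.1, hR.2, hiso⟩, hf.2⟩
  · rintro (hf | hf) <;> exact ⟨hf.1.1, hf.2⟩

lemma disjoint_Bset_Cset (s : Set Op) : Disjoint (Bset s) (Cset s) :=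
  Set.disjoint_left.2 fun _ hB hC => hB.1.2.2 hC.1.2.2

lemma gradeCount_Bset_add_gradeCount_Cset_sub (n : ℕ) :
    gradeCount (Bset {Op.sub}) n + gradeCount (Cset {Op.sub}) n = gradeCount (Aset {Op.sub}) n := by
  rw [Aset_sub_eq_union, gradeCount_union (isoClosed_Cset _) (disjoint_Bset_Cset _)
    (finite_classes (fun f hf => hf.1.1) n) (finite_classes (fun f hf => hf.1.1) n)]

/-- For `n ≥ 2`:
`|ℱ̄ₙ(−)| = 0`,
`|ℬ̄ₙ(−)| = Σ_{k=1}^{n−1} |𝒜̄_k(+,×,÷)|·|ℱ̄_{n−k}(+,×,÷)| − |𝒞̄ₙ(−)|`, and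
`|𝒞̄ₙ(−)| = Σ_{k=1}^{⌊n/2⌋} |𝒞̄_{n−2k}(+,×,÷)|·|ℱ̄_k(+,×,÷)|`,
with the convention `|𝒞̄₀(+,×,÷)| = 1`. -/
theorem count_minus (n : ℕ) (hn : 2 ≤ n) :
    countClasses (Fset {Op.sub} ∩ AEn n) = 0 ∧
    (countClasses (Bset {Op.sub} ∩ AEn n) : ℤ) =
      (∑ k ∈ Finset.Icc 1 (n - 1),
          countClasses (Aset {Op.add, Op.mul, Op.div} ∩ AEn k) *
            countClasses (Fset {Op.add, Op.mul, Op.div} ∩ AEn (n - k)) : ℤ)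
        - countClasses (Cset {Op.sub} ∩ AEn n) ∧
    countClasses (Cset {Op.sub} ∩ AEn n) =
      ∑ k ∈ Finset.Icc 1 (n / 2),
        (if n - 2 * k = 0 then 1
          else countClasses (Cset {Op.add, Op.mul, Op.div} ∩ AEn (n - 2 * k))) *
          countClasses (Fset {Op.add, Op.mul, Op.div} ∩ AEn k) := by
  have hA := countClasses_inter_AEn (isoClosed_Aset nonSub) fun f hf => hf.1
  have hF := countClasses_inter_AEn (isoClosed_Fset nonSub) fun f hf => hf.1.1
  have hC := fun s => countClasses_inter_AEn (isoClosed_Cset s) fun f hf => hf.1.1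
  have hB := countClasses_inter_AEn (isoClosed_Bset {Op.sub}) fun f hf => hf.1.1
  simp only [hA, hF, hC, hB]
  refine ⟨?_, ?_, gradeCount_Cset_sub n⟩
  · rw [Fset_sub_eq_empty, Set.empty_inter, countClasses, classes, Set.image_empty,
      Set.ncard_empty]
  · rw [eq_sub_iff_add_eq]
    exact_mod_cast (gradeCount_Bset_add_gradeCount_Cset_sub n).trans (gradeCount_Aset_sub n)

end
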